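/- arXiv:2210.14668 — 4 statements merged into one kernel-verified Lean document; each statement's English description precedes it below -/
import Mathlib

section
/- For all partitions λ and μ such that (λ+μ)/2 is a partition (i.e., λ_i + μ_i is even for all i), the squared number of standard Young tableaux of shape (λ+μ)/2 is at least the product of the numbers of standard Young tableaux of shapes λ and μ, after padding each partition to size d with a long first row: (f^{((λ+μ)/2)[d]})² ≥ f^{λ[d]} · f^{μ[d]} for all d ≥ max(|λ|+λ₁, |μ|+μ₁). Here ν[d] denotes the partition (d−|ν|, ν₁, ν₂, …). -/
/-- A partition, encoded as a weakly decreasing finitely supported function `ℕ → ℕ`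
(`0`-indexed: `f 0 = λ₁`). -/
def IsPtn (f : ℕ →₀ ℕ) : Prop := ∀ i j : ℕ, i ≤ j → f j ≤ f i

/-- The size `|λ|` of a partition. -/
def psize (f : ℕ →₀ ℕ) : ℕ := f.sum fun _ n => n

/-- `c` is a cell of the Young diagram of the shape `f` (rows indexed `0,1,…`). -/
def cellOf (f : ℕ → ℕ) (c : ℕ × ℕ) : Prop := c.2 < f c.1

/-- `T` is a standard Young tableau of shape `f` with `s` cells: it vanishes outside the
diagram, strictly increases along rows and columns, and is a bijection onto `{1, …, s}`. -/
def IsSYT (f : ℕ → ℕ) (s : ℕ) (T : ℕ × ℕ → ℕ) : Prop :=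
  (∀ c, ¬ cellOf f c → T c = 0) ∧
  (∀ i j, cellOf f (i, j + 1) → T (i, j) < T (i, j + 1)) ∧
  (∀ i j, cellOf f (i + 1, j) → T (i, j) < T (i + 1, j)) ∧
  (∀ c, cellOf f c → 1 ≤ T c ∧ T c ≤ s) ∧
  (∀ m, 1 ≤ m → m ≤ s → ∃! c, cellOf f c ∧ T c = m)

/-- `f^λ`: the number of standard Young tableaux of shape `f` with `s` cells. -/
noncomputable def fSYT (f : ℕ → ℕ) (s : ℕ) : ℕ := Nat.card {T : ℕ × ℕ → ℕ // IsSYT f s T}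

/-- Padding of a shape given as a plain function, with explicit size `s`:
`λ[d] = (d - s, λ₁, λ₂, …)`. -/
def padF (f : ℕ → ℕ) (s d : ℕ) : ℕ → ℕ := fun i => if i = 0 then d - s else f (i - 1)


open Finset in
lemma vand_identity (n : ℕ) (v : Fin n → ℚ) :
    ∑ i, v i * (Matrix.vandermonde (Function.update v i (v i + 1))).det
      = (∑ i : Fin n, (v i + (i : ℕ))) * (Matrix.vandermonde v).det := by
  have key : ∀ w : Fin n → ℚ, (Matrix.vandermonde w).det
      = (Matrix.of (fun i j : Fin n => (ascPochhammer ℚ (j : ℕ)).eval (w i))).det := by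
    intro w
    rw [Matrix.det_eval_matrixOfPolynomials_eq_det_vandermonde w
      (fun j : Fin n => ascPochhammer ℚ (j : ℕ))
      (fun j => ascPochhammer_natDegree ℚ _) (fun j => monic_ascPochhammer ℚ _)]
  simp only [key, Matrix.det_apply', Finset.mul_sum, Matrix.of_apply]
  rw [Finset.sum_comm]
  refine Finset.sum_congr rfl fun σ _ => ?_
  have h1 : ∀ r : Fin n, v r * ∏ i : Fin n, (ascPochhammer ℚ (i : ℕ)).eval (Function.update v r (v r + 1) (σ i))
      = (v r + ((σ.symm r : Fin n) : ℕ)) * ∏ i : Fin n, (ascPochhammer ℚ (i : ℕ)).eval (v (σ i)) := by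
    intro r
    rw [← Finset.mul_prod_erase univ _ (Finset.mem_univ (σ.symm r)),
      ← Finset.mul_prod_erase univ (fun i : Fin n => (ascPochhammer ℚ (i : ℕ)).eval (v (σ i))) (Finset.mem_univ (σ.symm r))]
    have h2 : ∏ i ∈ univ.erase (σ.symm r), (ascPochhammer ℚ (i : ℕ)).eval (Function.update v r (v r + 1) (σ i))
      = ∏ i ∈ univ.erase (σ.symm r), (ascPochhammer ℚ (i : ℕ)).eval (v (σ i)) := by
      refine Finset.prod_congr rfl fun i hi => ?_
      rw [Function.update_of_ne]
      intro h
      apply (Finset.mem_erase.1 hi).1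
      rw [← h]; simp
    rw [h2]
    simp only [Equiv.apply_symm_apply, Function.update_self]
    rw [← mul_assoc, ← mul_assoc]
    congr 1
    have e1 := congrArg (Polynomial.eval (v r)) (ascPochhammer_succ_left ℚ ((σ.symm r : Fin n) : ℕ))
    have e2 := congrArg (Polynomial.eval (v r)) (ascPochhammer_succ_right ℚ ((σ.symm r : Fin n) : ℕ))
    simp at e1 e2
    rw [← e1, e2]; ring
  calc _ = ∑ r, ((Equiv.Perm.sign σ : ℤ) : ℚ) * (v r * ∏ i : Fin n, (ascPochhammer ℚ (i : ℕ)).eval (Function.update v r (v r + 1) (σ i))) := by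
        refine Finset.sum_congr rfl fun r _ => ?_
        ring
    _ = ∑ r, (v r + ((σ.symm r : Fin n) : ℕ)) * (((Equiv.Perm.sign σ : ℤ) : ℚ) * ∏ i : Fin n, (ascPochhammer ℚ (i : ℕ)).eval (v (σ i))) := by
        refine Finset.sum_congr rfl fun r _ => ?_
        rw [h1]; ring
    _ = _ := by
        rw [← Finset.sum_mul]
        congr 1
        rw [Finset.sum_add_distrib, Finset.sum_add_distrib]
        congr 1
        exact Equiv.sum_comp σ.symm (fun i : Fin n => ((i : ℕ) : ℚ))

lemma fact_mid (n m p : ℕ) (h : n + m = 2 * p) : p.factorial ^ 2 ≤ n.factorial * m.factorial := by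
  have h1 := Nat.choose_mul_factorial_mul_factorial (show n ≤ 2 * p by omega)
  have h2 := Nat.choose_mul_factorial_mul_factorial (show p ≤ 2 * p by omega)
  have h3 := Nat.choose_le_centralBinom n p
  rw [Nat.centralBinom] at h3
  have e : 2 * p - n = m := by omega
  have e' : 2 * p - p = p := by omega
  rw [e] at h1
  rw [e'] at h2
  have hpos : 0 < (2 * p).choose p := Nat.choose_pos (by omega)
  have h4 : (2*p).choose p * (p.factorial ^ 2) ≤ (2*p).choose p * (n.factorial * m.factorial) := by
    calc _ = (2*p).choose n * n.factorial * m.factorial := by rw [h1, ← h2]; ring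
      _ ≤ (2*p).choose p * n.factorial * m.factorial := by gcongr
      _ = _ := by ring
  exact Nat.le_of_mul_le_mul_left h4 hpos

lemma cell_update (a : ℕ → ℕ) (i : ℕ) (h : 0 < a i) (c : ℕ × ℕ) :
    cellOf a c ↔ cellOf (Function.update a i (a i - 1)) c ∨ c = (i, a i - 1) := by
  obtain ⟨r, s⟩ := c
  simp only [cellOf, Prod.mk.injEq]
  by_cases hr : r = i
  · subst hr; simp; omega
  · rw [Function.update_of_ne hr]; simp [hr]

lemma not_cell_update (a : ℕ → ℕ) (i : ℕ) :
    ¬ cellOf (Function.update a i (a i - 1)) (i, a i - 1) := by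
  simp [cellOf]

lemma syt_add (a : ℕ → ℕ) (ha : Antitone a) (i d : ℕ) (h : a (i + 1) < a i) (T : ℕ × ℕ → ℕ)
    (hT : IsSYT (Function.update a i (a i - 1)) d T) :
    IsSYT a (d + 1) (Function.update T (i, a i - 1) (d + 1)) := by
  have hc := cell_update a i (by omega)
  have hn := not_cell_update a i
  set a' := Function.update a i (a i - 1) with ha'
  obtain ⟨h1, h2, h3, h4, h5⟩ := hT
  have hle : ∀ c, T c ≤ d := by
    intro c
    by_cases h : cellOf a' c
    · exact (h4 c h).2
    · rw [h1 c h]; omega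
  refine ⟨?_, ?_, ?_, ?_, ?_⟩
  · intro c h
    rw [hc] at h
    push Not at h
    rw [Function.update_of_ne h.2]
    exact h1 c h.1
  · intro r s hh
    have hne : (r, s) ≠ (i, a i - 1) := by
      rintro h; simp only [Prod.mk.injEq] at h; obtain ⟨rfl, rfl⟩ := h
      simp only [cellOf] at hh; omega
    rw [Function.update_of_ne hne]
    rcases (hc _).1 hh with hh | hh
    · rw [Function.update_of_ne (by rintro h; exact hn (h ▸ hh))]
      exact h2 r s hh
    · rw [hh, Function.update_self]; have := hle (r, s); omega
  · intro r s hh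
    have hne : (r, s) ≠ (i, a i - 1) := by
      rintro h; simp only [Prod.mk.injEq] at h; obtain ⟨rfl, rfl⟩ := h
      simp only [cellOf] at hh; omega
    rw [Function.update_of_ne hne]
    rcases (hc _).1 hh with hh | hh
    · rw [Function.update_of_ne (by rintro h; exact hn (h ▸ hh))]
      exact h3 r s hh
    · rw [hh, Function.update_self]; have := hle (r, s); omega
  · intro c hh
    by_cases e : c = (i, a i - 1)
    · rw [e, Function.update_self]; omega
    · rw [Function.update_of_ne e]
      have := h4 c (((hc _).1 hh).resolve_right e)
      omega
  · intro m hm hm'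
    rcases Nat.lt_or_ge d m with hd | hd
    · obtain rfl : m = d + 1 := by omega
      refine ⟨(i, a i - 1), ⟨(hc _).2 (Or.inr rfl), by simp⟩, ?_⟩
      rintro c ⟨_, hv⟩
      by_contra e
      rw [Function.update_of_ne e] at hv
      have := hle c; omega
    · obtain ⟨c, ⟨hcc, hv⟩, hu⟩ := h5 m hm hd
      have e : ∀ c, cellOf a' c → c ≠ (i, a i - 1) := fun c h e => hn (e ▸ h)
      refine ⟨c, ⟨(hc _).2 (Or.inl hcc), by rw [Function.update_of_ne (e c hcc)]; exact hv⟩, ?_⟩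
      rintro c' ⟨hc1, hc2⟩
      rcases (hc _).1 hc1 with hh | hh
      · rw [Function.update_of_ne (e c' hh)] at hc2
        exact hu c' ⟨hh, hc2⟩
      · rw [hh, Function.update_self] at hc2; omega

lemma syt_rem (a : ℕ → ℕ) (ha : Antitone a) (i d : ℕ) (h : a (i + 1) < a i) (T : ℕ × ℕ → ℕ)
    (hT : IsSYT a (d + 1) T) (hv : T (i, a i - 1) = d + 1) :
    IsSYT (Function.update a i (a i - 1)) d (Function.update T (i, a i - 1) 0) := by
  have hc := cell_update a i (by omega)
  have hn := not_cell_update a i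
  have hanti : ∀ r, a (r + 1) ≤ a r := fun r => ha (Nat.le_succ r)
  set a' := Function.update a i (a i - 1) with ha'
  obtain ⟨h1, h2, h3, h4, h5⟩ := hT
  have e : ∀ c, cellOf a' c → c ≠ (i, a i - 1) := fun c h e => hn (e ▸ h)
  have ec : ∀ c, cellOf a' c → cellOf a c := fun c h => (hc c).2 (Or.inl h)
  have hlt : ∀ c, cellOf a c → T c ≤ d + 1 := fun c h => (h4 c h).2
  refine ⟨?_, ?_, ?_, ?_, ?_⟩
  · intro c hh
    by_cases e : c = (i, a i - 1)
    · rw [e, Function.update_self]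
    · rw [Function.update_of_ne e]
      apply h1
      rw [hc]; tauto
  · intro r s hh
    have := h2 r s (ec _ hh)
    have hl := hlt _ (ec _ hh)
    rw [Function.update_of_ne (e _ hh), Function.update_of_ne]
    · exact this
    · intro h; rw [h, hv] at this; omega
  · intro r s hh
    have := h3 r s (ec _ hh)
    have hl := hlt _ (ec _ hh)
    rw [Function.update_of_ne (e _ hh), Function.update_of_ne]
    · exact this
    · intro h; rw [h, hv] at this; omega
  · intro c hh
    rw [Function.update_of_ne (e _ hh)]
    have := h4 c (ec _ hh)
    refine ⟨this.1, ?_⟩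
    by_contra hcon
    have e1 : T c = d + 1 := by omega
    obtain ⟨c0, _, hu⟩ := h5 (d + 1) (by omega) le_rfl
    exact e c hh ((hu c ⟨ec _ hh, e1⟩).trans (hu _ ⟨(hc _).2 (Or.inr rfl), hv⟩).symm)
  · intro m hm hm'
    obtain ⟨c, ⟨hcc, hv'⟩, hu⟩ := h5 m hm (by omega)
    have hne : c ≠ (i, a i - 1) := by rintro rfl; omega
    refine ⟨c, ⟨((hc _).1 hcc).resolve_right hne, by rw [Function.update_of_ne hne]; exact hv'⟩, ?_⟩
    rintro c' ⟨hc1, hc2⟩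
    rw [Function.update_of_ne (e _ hc1)] at hc2
    exact hu c' ⟨ec _ hc1, hc2⟩

lemma syt_max (a : ℕ → ℕ) (ha : Antitone a) (d : ℕ) (T : ℕ × ℕ → ℕ)
    (hT : IsSYT a (d + 1) T) : ∃ i, a (i + 1) < a i ∧ T (i, a i - 1) = d + 1 := by
  obtain ⟨h1, h2, h3, h4, h5⟩ := hT
  obtain ⟨⟨i, j⟩, ⟨hc, hv⟩, -⟩ := h5 (d + 1) (by omega) le_rfl
  have hj : ¬ cellOf a (i, j + 1) := fun h => by
    have := h2 i j h; have := (h4 _ h).2; omega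
  have hi : ¬ cellOf a (i + 1, j) := fun h => by
    have := h3 i j h; have := (h4 _ h).2; omega
  simp only [cellOf] at hc hi hj
  have e : a i - 1 = j := by omega
  exact ⟨i, by omega, by rw [e]; exact hv⟩

/-- Adding a maximal entry at a corner. -/
def addMap (k d : ℕ) (a : ℕ → ℕ) (ha : Antitone a) :
    (Σ i : {i : Fin k // a (i + 1) < a i},
      {T : ℕ × ℕ → ℕ // IsSYT (Function.update a i.1 (a i.1 - 1)) d T}) →
    {T : ℕ × ℕ → ℕ // IsSYT a (d + 1) T} :=
  fun p => ⟨Function.update p.2.1 ((p.1.1 : ℕ), a p.1.1 - 1) (d + 1),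
    syt_add a ha p.1.1 d p.1.2 p.2.1 p.2.2⟩

lemma addMap_bij (k d : ℕ) (a : ℕ → ℕ) (ha : Antitone a) (hk : ∀ i, k ≤ i → a i = 0) :
    Function.Bijective (addMap k d a ha) := by
  constructor
  · rintro ⟨⟨i, hi⟩, ⟨T, hT⟩⟩ ⟨⟨i', hi'⟩, ⟨T', hT'⟩⟩ h
    have hf : Function.update T ((i : ℕ), a i - 1) (d + 1)
      = Function.update T' ((i' : ℕ), a i' - 1) (d + 1) := congrArg Subtype.val h
    have hS := syt_add a ha i d hi T hT
    have hS' := syt_add a ha i' d hi' T' hT'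
    have hii : i = i' := by
      obtain ⟨c, _, hu⟩ := hS.2.2.2.2 (d + 1) (by omega) le_rfl
      have u1 := hu ((i : ℕ), a i - 1) ⟨by simp only [cellOf]; omega, by simp⟩
      have u2 := hu ((i' : ℕ), a i' - 1) ⟨by simp only [cellOf]; omega, by rw [hf]; simp⟩
      have := congrArg Prod.fst (u1.trans u2.symm)
      exact Fin.ext this
    subst hii
    have hTT : T = T' := by
      funext c
      by_cases e : c = ((i : ℕ), a i - 1)
      · rw [hT.1 c (e ▸ not_cell_update a i), hT'.1 c (e ▸ not_cell_update a i)]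
      · have := congrFun hf c
        rwa [Function.update_of_ne e, Function.update_of_ne e] at this
    subst hTT
    rfl
  · rintro ⟨T, hT⟩
    obtain ⟨i, hi, hv⟩ := syt_max a ha d T hT
    have hik : i < k := by
      by_contra h
      have := hk i (by omega); omega
    refine ⟨⟨⟨⟨i, hik⟩, hi⟩, ⟨_, syt_rem a ha i d hi T hT hv⟩⟩, ?_⟩
    apply Subtype.ext
    simp only [addMap]
    rw [Function.update_idem, ← hv, Function.update_eq_self]

lemma anti_update (a : ℕ → ℕ) (ha : Antitone a) (i : ℕ) (h : a (i + 1) < a i) :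
    Antitone (Function.update a i (a i - 1)) := by
  apply antitone_nat_of_succ_le
  intro n
  have := ha (Nat.le_succ n)
  simp only [Function.update_apply]
  split_ifs with h1 h2 h2
  · omega
  · subst h1; simp only [Nat.succ_eq_add_one] at this; omega
  · subst h2; omega
  · exact this

/-- Shifted, negated coordinates. -/
def vv (k : ℕ) (a : ℕ → ℕ) : Fin k → ℚ := fun i => -((a i + (k - 1 - (i : ℕ)) : ℕ) : ℚ)

/-- Frobenius quotient. -/
noncomputable def WW (k : ℕ) (a : ℕ → ℕ) : ℚ :=
  (Matrix.vandermonde (vv k a)).det / ∏ i : Fin k, ((a i + (k - 1 - (i : ℕ))).factorial : ℚ)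

lemma vv_lt (k : ℕ) (a : ℕ → ℕ) (ha : Antitone a) (i j : Fin k) (h : i < j) :
    vv k a i < vv k a j := by
  simp only [vv]
  have := ha (show (i : ℕ) ≤ j from le_of_lt h)
  have h2 : (i : ℕ) < j := h
  have := j.2
  apply neg_lt_neg
  exact_mod_cast (by omega : a j + (k - 1 - (j : ℕ)) < a i + (k - 1 - (i : ℕ)))

lemma vdet_pos (k : ℕ) (a : ℕ → ℕ) (ha : Antitone a) : 0 < (Matrix.vandermonde (vv k a)).det := by
  rw [Matrix.det_vandermonde]
  refine Finset.prod_pos fun i _ => Finset.prod_pos fun j hj => ?_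
  have := vv_lt k a ha i j (Finset.mem_Ioi.1 hj)
  linarith

lemma WW_pos (k : ℕ) (a : ℕ → ℕ) (ha : Antitone a) : 0 < WW k a := by
  apply div_pos (vdet_pos k a ha)
  exact Finset.prod_pos fun i _ => by exact_mod_cast Nat.factorial_pos _

lemma WW_step (k : ℕ) (a : ℕ → ℕ) (i : Fin k) (h : 0 < a i) :
    WW k (Function.update a i (a i - 1)) =
      -(vv k a i) * (Matrix.vandermonde (Function.update (vv k a) i (vv k a i + 1))).det
        / ∏ i : Fin k, ((a i + (k - 1 - (i : ℕ))).factorial : ℚ) := by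
  have e : vv k (Function.update a i (a i - 1)) = Function.update (vv k a) i (vv k a i + 1) := by
    funext j
    by_cases hj : j = i
    · subst hj
      simp only [vv, Function.update_self]
      have : a j + (k - 1 - (j : ℕ)) = (a j - 1 + (k - 1 - (j : ℕ))) + 1 := by omega
      rw [this]; push_cast; ring
    · have hj' : (j : ℕ) ≠ i := fun h => hj (Fin.ext h)
      simp only [vv, Function.update_of_ne hj, Function.update_of_ne hj']
  have e2 : ∏ j : Fin k, ((a j + (k - 1 - (j : ℕ))).factorial : ℚ) = -(vv k a i) *
      ∏ j : Fin k, (((Function.update a i (a i - 1)) j + (k - 1 - (j : ℕ))).factorial : ℚ) := by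
    rw [← Finset.mul_prod_erase _ _ (Finset.mem_univ i),
      ← Finset.mul_prod_erase Finset.univ (fun j : Fin k => (((Function.update a i (a i - 1)) j + (k - 1 - (j : ℕ))).factorial : ℚ)) (Finset.mem_univ i), ← mul_assoc]
    congr 1
    · simp only [vv, Function.update_self]
      have : a i + (k - 1 - (i : ℕ)) = (a i - 1 + (k - 1 - (i : ℕ))) + 1 := by omega
      rw [this, Nat.factorial_succ]; push_cast; ring
    · refine Finset.prod_congr rfl fun j hj => ?_
      have hj' : (j : ℕ) ≠ i := fun h => (Finset.mem_erase.1 hj).1 (Fin.ext h)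
      rw [Function.update_of_ne hj']
  rw [e2, WW, e]
  have hv : -(vv k a i) ≠ 0 := by
    simp only [vv, neg_neg]
    exact_mod_cast (by omega : a i + (k - 1 - (i : ℕ)) ≠ 0)
  rw [mul_div_mul_left _ _ hv]

lemma noncorner (k : ℕ) (a : ℕ → ℕ) (ha : Antitone a) (hk : ∀ i, k ≤ i → a i = 0) (i : Fin k)
    (h : ¬ a (i + 1) < a i) :
    (vv k a i) * (Matrix.vandermonde (Function.update (vv k a) i (vv k a i + 1))).det = 0 := by
  have h1 : a (i + 1) = a i := le_antisymm (ha (Nat.le_succ _)) (by omega)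
  have hi := i.2
  by_cases hl : (i : ℕ) + 1 < k
  · have : (Matrix.vandermonde (Function.update (vv k a) i (vv k a i + 1))).det = 0 := by
      apply Matrix.det_zero_of_row_eq (i := i) (j := ⟨i + 1, hl⟩)
      · intro h; have := congrArg Fin.val h; simp at this
      · funext c
        have hne : (⟨i + 1, hl⟩ : Fin k) ≠ i := by
          intro h; have := congrArg Fin.val h; simp at this
        simp only [Matrix.vandermonde_apply, Function.update_self, Function.update_of_ne hne]
        congr 1
        simp only [vv, h1]
        have : a i + (k - 1 - (i : ℕ)) = a i + (k - 1 - ((i : ℕ) + 1)) + 1 := by omega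
        rw [this]; push_cast; ring
    rw [this, mul_zero]
  · have h0 := hk (i + 1) (by omega)
    have : vv k a i = 0 := by
      simp only [vv]
      rw [← h1, h0]
      have : k - 1 - (i : ℕ) = 0 := by omega
      rw [this]; simp
    rw [this, zero_mul]

lemma sum_vv (k : ℕ) (a : ℕ → ℕ) :
    ∑ i : Fin k, (vv k a i + (i : ℕ)) = -((∑ i : Fin k, a i : ℕ) : ℚ) := by
  have h : ∑ i : Fin k, ((k - 1 - (i : ℕ) : ℕ) : ℚ) = ∑ i : Fin k, ((i : ℕ) : ℚ) := by
    rw [Fin.sum_univ_eq_sum_range (fun i => ((k - 1 - i : ℕ) : ℚ)) k,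
      Fin.sum_univ_eq_sum_range (fun i => ((i : ℕ) : ℚ)) k]
    exact Finset.sum_range_reflect (fun i => ((i : ℕ) : ℚ)) k
  simp only [vv, Finset.sum_add_distrib, Nat.cast_add, neg_add, Finset.sum_neg_distrib, h,
    Nat.cast_sum]
  ring

theorem frobenius_syt (k : ℕ) (d : ℕ) : ∀ (a : ℕ → ℕ), Antitone a → (∀ i, k ≤ i → a i = 0) →
    ∑ i : Fin k, a i = d → Finite {T : ℕ × ℕ → ℕ // IsSYT a d T} ∧
    (fSYT a d : ℚ) = d.factorial * WW k a / WW k (fun _ => 0) := by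
  induction d with
  | zero =>
    intro a ha hk hs
    have h0 : a = fun _ => 0 := by
      funext i
      by_cases h : k ≤ i
      · exact hk i h
      · exact (Finset.sum_eq_zero_iff.1 hs) ⟨i, by omega⟩ (Finset.mem_univ _)
    subst h0
    have hu : Unique {T : ℕ × ℕ → ℕ // IsSYT (fun _ => 0) 0 T} :=
      { default := ⟨fun _ => 0, by
          refine ⟨fun _ _ => rfl, ?_, ?_, ?_, ?_⟩
          · intro i j h; simp [cellOf] at h
          · intro i j h; simp [cellOf] at h
          · intro c h; simp [cellOf] at h
          · intro m h1 h2; omega⟩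
        uniq := by
          rintro ⟨T, hT⟩
          apply Subtype.ext
          funext c
          exact hT.1 c (by simp [cellOf]) }
    refine ⟨inferInstance, ?_⟩
    rw [fSYT, Nat.card_unique]
    have := (WW_pos k (fun _ => 0) antitone_const).ne'
    simp [this]
  | succ d ih =>
    intro a ha hk hs
    have hbij := addMap_bij k d a ha hk
    have IH : ∀ i : {i : Fin k // a (i + 1) < a i}, _ := fun i =>
      ih (Function.update a i.1 (a i.1 - 1)) (anti_update a ha _ i.2) (by
        intro j hj
        have := i.1.2
        rw [Function.update_of_ne (by omega)]
        exact hk j hj) (by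
        have hi := i.2
        rw [← Finset.add_sum_erase _ _ (Finset.mem_univ i.1)] at hs ⊢
        have : ∑ x ∈ Finset.univ.erase i.1, Function.update a i.1 (a i.1 - 1) (x : ℕ)
            = ∑ x ∈ Finset.univ.erase i.1, a (x : ℕ) := by
          refine Finset.sum_congr rfl fun j hj => ?_
          have hj' : (j : ℕ) ≠ i.1 := fun h => (Finset.mem_erase.1 hj).1 (Fin.ext h)
          rw [Function.update_of_ne hj']
        rw [this, Function.update_self]
        omega)
    haveI : ∀ i : {i : Fin k // a (i + 1) < a i},
        Finite {T : ℕ × ℕ → ℕ // IsSYT (Function.update a i.1 (a i.1 - 1)) d T} :=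
      fun i => (IH i).1
    refine ⟨Finite.of_surjective _ hbij.2, ?_⟩
    have hcard : fSYT a (d + 1) = ∑ i : {i : Fin k // a (i + 1) < a i},
        fSYT (Function.update a i.1 (a i.1 - 1)) d := by
      rw [fSYT, ← Nat.card_congr (Equiv.ofBijective _ hbij), Nat.card_sigma]
      rfl
    rw [hcard]
    push_cast
    have hP : (∏ i : Fin k, ((a i + (k - 1 - (i : ℕ))).factorial : ℚ)) ≠ 0 :=
      Finset.prod_ne_zero_iff.2 fun i _ => by exact_mod_cast (Nat.factorial_pos _).ne'
    have h0 := (WW_pos k (fun _ => 0) antitone_const).ne'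
    have hid := vand_identity k (vv k a)
    rw [sum_vv, hs] at hid
    set P := (∏ i : Fin k, ((a i + (k - 1 - (i : ℕ))).factorial : ℚ)) with hPdef
    set g : Fin k → ℚ := fun i =>
      vv k a i * (Matrix.vandermonde (Function.update (vv k a) i (vv k a i + 1))).det with hg
    have hsum : ∑ i : {i : Fin k // a (i + 1) < a i}, g i.1 = ∑ i, g i := by
      rw [← Finset.sum_subtype (Finset.univ.filter fun i : Fin k => a (i + 1) < a i) (by simp) g]
      apply Finset.sum_subset (Finset.subset_univ _)
      intro i _ hi
      exact noncorner k a ha hk i (by simpa using hi)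
    have hterm : ∀ i : {i : Fin k // a (i + 1) < a i},
        (fSYT (Function.update a i.1 (a i.1 - 1)) d : ℚ)
          = -(d.factorial / P / WW k (fun _ => 0)) * g i.1 := by
      intro i
      have hi := i.2
      rw [(IH i).2, WW_step k a i.1 (by omega)]
      simp only [hg]
      ring
    rw [Finset.sum_congr rfl fun i _ => hterm i, ← Finset.mul_sum, hsum, hid]
    have hWa : WW k a = (Matrix.vandermonde (vv k a)).det / P := rfl
    rw [hWa, Nat.factorial_succ]
    push_cast
    ring

lemma WW_mid (k : ℕ) (a b c : ℕ → ℕ) (ha : Antitone a) (hb : Antitone b)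
    (h : ∀ i, a i + b i = 2 * c i) : WW k a * WW k b ≤ WW k c ^ 2 := by
  have hv : ∀ i, vv k a i + vv k b i = 2 * vv k c i := by
    intro i
    simp only [vv]
    have := h i
    have h2 : (a i : ℚ) + b i = 2 * c i := by exact_mod_cast this
    push_cast
    linarith
  simp only [WW]
  rw [div_mul_div_comm, div_pow]
  apply div_le_div₀ (sq_nonneg _)
  · simp only [Matrix.det_vandermonde]
    rw [← Finset.prod_mul_distrib, ← Finset.prod_pow]
    refine Finset.prod_le_prod (fun i _ => ?_) (fun i _ => ?_)
    · refine mul_nonneg (Finset.prod_nonneg fun j hj => ?_) (Finset.prod_nonneg fun j hj => ?_)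
      · have := vv_lt k a ha i j (Finset.mem_Ioi.1 hj); linarith
      · have := vv_lt k b hb i j (Finset.mem_Ioi.1 hj); linarith
    · rw [← Finset.prod_mul_distrib, ← Finset.prod_pow]
      refine Finset.prod_le_prod (fun j hj => ?_) (fun j hj => ?_)
      · have h1 := vv_lt k a ha i j (Finset.mem_Ioi.1 hj)
        have h2 := vv_lt k b hb i j (Finset.mem_Ioi.1 hj)
        exact mul_nonneg (by linarith) (by linarith)
      · have e1 := hv i
        have e2 := hv j
        have e3 : vv k c j - vv k c i = ((vv k a j - vv k a i) + (vv k b j - vv k b i)) / 2 := by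
          linarith
        rw [e3]
        nlinarith [sq_nonneg ((vv k a j - vv k a i) - (vv k b j - vv k b i))]
  · exact pow_pos (Finset.prod_pos fun i _ => by exact_mod_cast Nat.factorial_pos _) 2
  · rw [← Finset.prod_mul_distrib, ← Finset.prod_pow]
    refine Finset.prod_le_prod (fun i _ => by positivity) (fun i _ => ?_)
    have := h i
    exact_mod_cast fact_mid _ _ _ (by omega)

theorem general_syt (k d : ℕ) (a b c : ℕ → ℕ) (ha : Antitone a) (hb : Antitone b) 
    (hka : ∀ i, k ≤ i → a i = 0) (hkb : ∀ i, k ≤ i → b i = 0)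
    (hsa : ∑ i : Fin k, a i = d) (hsb : ∑ i : Fin k, b i = d)
    (h : ∀ i, a i + b i = 2 * c i) : fSYT a d * fSYT b d ≤ fSYT c d ^ 2 := by
  have hc : Antitone c := by
    intro i j hij
    have := ha hij; have := hb hij; have := h i; have := h j
    omega
  have hkc : ∀ i, k ≤ i → c i = 0 := by
    intro i hi
    have := hka i hi; have := hkb i hi; have := h i
    omega
  have hsc : ∑ i : Fin k, c i = d := by
    have : ∑ i : Fin k, (a i + b i) = ∑ i : Fin k, 2 * c i := Finset.sum_congr rfl fun i _ => h i
    rw [Finset.sum_add_distrib, ← Finset.mul_sum] at this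
    omega
  have fa := (frobenius_syt k d a ha hka hsa).2
  have fb := (frobenius_syt k d b hb hkb hsb).2
  have fc := (frobenius_syt k d c hc hkc hsc).2
  have hW := WW_mid k a b c ha hb h
  have h0 := WW_pos k (fun _ => 0) antitone_const
  have : (fSYT a d : ℚ) * fSYT b d ≤ (fSYT c d : ℚ) ^ 2 := by
    rw [fa, fb, fc]
    calc _ = (d.factorial / WW k (fun _ => 0)) ^ 2 * (WW k a * WW k b) := by ring
      _ ≤ (d.factorial / WW k (fun _ => 0)) ^ 2 * (WW k c ^ 2) := by gcongr
      _ = _ := by ring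
  exact_mod_cast this

lemma pad_anti (l : ℕ →₀ ℕ) (hl : IsPtn l) (d : ℕ) (hd : psize l + l 0 ≤ d) :
    Antitone (padF l (psize l) d) := by
  apply antitone_nat_of_succ_le
  intro n
  rcases n with _ | n
  · simp [padF]; omega
  · simp [padF]; exact hl _ _ (Nat.le_succ n)

lemma psize_eq (l : ℕ →₀ ℕ) (k : ℕ) (hk : ∀ i, k ≤ i → l i = 0) :
    psize l = ∑ i : Fin k, l i := by
  rw [psize, Fin.sum_univ_eq_sum_range (fun i => l i) k]
  apply Finsupp.sum_of_support_subset _ _ _ (by simp)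
  intro i hi
  rw [Finset.mem_range]
  by_contra h
  exact (Finsupp.mem_support_iff.1 hi) (hk i (by omega))

lemma pad_sum (l : ℕ →₀ ℕ) (k d : ℕ) (hk : ∀ i, k ≤ i → l i = 0) (hd : psize l ≤ d) :
    ∑ i : Fin (k + 1), padF l (psize l) d i = d := by
  rw [Fin.sum_univ_succ]
  simp only [padF, Fin.val_zero, Fin.val_succ, if_true, Nat.add_sub_cancel, Nat.succ_ne_zero,
    if_false]
  rw [← psize_eq l k hk]; omega

lemma supp_bound (l : ℕ →₀ ℕ) : ∃ k, ∀ i, k ≤ i → l i = 0 := by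
  refine ⟨l.support.sup id + 1, fun i hi => ?_⟩
  by_contra h
  have : i ≤ l.support.sup id := Finset.le_sup (f := id) (Finsupp.mem_support_iff.2 h)
  omega

/-- Proposition `thmd`, inequality (younglog): for partitions `λ, μ` with `(λ+μ)/2`
a partition, `(f^{((λ+μ)/2)[d]})² ≥ f^{λ[d]} · f^{μ[d]}` for all
`d ≥ max(|λ|+λ₁, |μ|+μ₁)`. -/
theorem fSYT_padded_log_concave (l m : ℕ →₀ ℕ) (hl : IsPtn l) (hm : IsPtn m)
    (hev : ∀ i, Even (l i + m i)) (d : ℕ)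
    (hd : max (psize l + l 0) (psize m + m 0) ≤ d) :
    fSYT (padF l (psize l) d) d * fSYT (padF m (psize m) d) d ≤
      fSYT (padF (fun i => (l i + m i) / 2) ((psize l + psize m) / 2) d) d ^ 2 := by
  obtain ⟨k1, hk1⟩ := supp_bound l
  obtain ⟨k2, hk2⟩ := supp_bound m
  have hdl := (le_max_left _ _).trans hd
  have hdm := (le_max_right _ _).trans hd
  have hkl : ∀ i, k1 + k2 ≤ i → l i = 0 := fun i hi => hk1 i (by omega)
  have hkm : ∀ i, k1 + k2 ≤ i → m i = 0 := fun i hi => hk2 i (by omega)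
  have hE : Even (psize l + psize m) := by
    rw [psize_eq l _ hkl, psize_eq m _ hkm, ← Finset.sum_add_distrib]
    exact Finset.even_sum _ fun i _ => hev i
  refine general_syt (k1 + k2 + 1) d _ _ _ (pad_anti l hl d hdl) (pad_anti m hm d hdm) ?_ ?_
    (pad_sum l _ d hkl (by omega)) (pad_sum m _ d hkm (by omega)) ?_
  · intro i hi
    rw [padF, if_neg (by omega)]
    exact hkl _ (by omega)
  · intro i hi
    rw [padF, if_neg (by omega)]
    exact hkm _ (by omega)
  · intro i
    obtain ⟨e, he⟩ := hE
    rcases i with _ | i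
    · simp only [padF, if_true]; omega
    · obtain ⟨e', he'⟩ := hev i
      simp only [padF, Nat.succ_ne_zero, if_false, Nat.add_sub_cancel]; omega
end

section
/- The Kronecker coefficient g_{(N,N),(N,N)}^{(N,N)} (the multiplicity of the irreducible S_{2N}-representation indexed by (N,N) in the tensor square of itself) equals 0 when N is odd and equals 1 when N is even. -/
open MvPolynomial

/-- Power sum polynomial `p_r` in `d` variables. -/
noncomputable def powSum (d r : ℕ) : MvPolynomial (Fin d) ℤ := ∑ i, X i ^ r

/-- The power sum polynomial associated to a permutation: the product of `p_c` over
cycle lengths `c` of the permutation, including fixed points. -/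
noncomputable def permPowSum (d : ℕ) (σ : Equiv.Perm (Fin d)) : MvPolynomial (Fin d) ℤ :=
  (σ.cycleType.map (powSum d)).prod * (powSum d 1) ^ (d - σ.cycleType.sum)

/-- The Vandermonde product `a_δ = ∏_{i<j} (x_i - x_j)`. -/
noncomputable def vandermonde (d : ℕ) : MvPolynomial (Fin d) ℤ :=
  ∏ p ∈ Finset.univ.filter (fun p : Fin d × Fin d => p.1 < p.2), (X p.1 - X p.2)

/-- The exponent `λ + δ` where `δ = (d-1, d-2, …, 0)`; `lam` is `0`-indexed. -/
noncomputable def staircase (d : ℕ) (lam : ℕ → ℕ) : Fin d →₀ ℕ :=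
  Finsupp.equivFunOnFinite.symm (fun i => lam i.val + (d - 1 - i.val))

/-- Frobenius character formula: the irreducible character `χ^λ` of the symmetric
group `S_d` evaluated at `σ` is the coefficient of `x^{λ+δ}` in `a_δ · p_{cycletype σ}`. -/
noncomputable def chi (d : ℕ) (lam : ℕ → ℕ) (σ : Equiv.Perm (Fin d)) : ℤ :=
  coeff (staircase d lam) (vandermonde d * permPowSum d σ)

/-- The Kronecker coefficient `g_{λμ}^ν = ⟨χ^λ χ^μ, χ^ν⟩` for `S_d`. -/
noncomputable def gKron (d : ℕ) (lam mu nu : ℕ → ℕ) : ℤ :=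
  (∑ σ : Equiv.Perm (Fin d), chi d lam σ * chi d mu σ * chi d nu σ) / (d.factorial : ℤ)

/-- The padded partition `λ[d] = (d - |λ|, λ₁, λ₂, …)`. -/
def pad (f : ℕ →₀ ℕ) (d : ℕ) : ℕ → ℕ := fun i => if i = 0 then d - psize f else f (i - 1)

/-- The two-row partition `(N, N)`. -/
def twoRow (N : ℕ) : ℕ → ℕ := fun i => if i < 2 then N else 0

noncomputable def qQ (p : ℕ) : Polynomial ℤ := ∑ i ∈ Finset.range (p+1), Polynomial.X^i

theorem qQ_succ (p : ℕ) : qQ (p+1) = qQ p + Polynomial.X^(p+1) := by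
  unfold qQ; rw [Finset.sum_range_succ]

theorem qQ_succ' (p : ℕ) : qQ (p+1) = 1 + Polynomial.X * qQ p := by
  unfold qQ; rw [Finset.sum_range_succ', Finset.mul_sum, add_comm]; simp [pow_succ']

theorem qQ_add (a b : ℕ) : qQ (a+1+b) = qQ a + Polynomial.X^(a+1) * qQ b := by
  induction b with
  | zero => rw [add_zero, qQ_succ]; simp [qQ]
  | succ b ih => rw [← add_assoc, qQ_succ, ih, qQ_succ]; ring

theorem qQ_CG (p e : ℕ) : qQ p * qQ (p+e) = ∑ k ∈ Finset.range (p+1), Polynomial.X^(p-k) * qQ (2*k+e) := by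
  induction p with
  | zero => simp [qQ]
  | succ p ih =>
    rw [Finset.sum_range_succ]
    have h1 : ∑ k ∈ Finset.range (p+1), Polynomial.X^(p+1-k) * qQ (2*k+e) = Polynomial.X * (qQ p * qQ (p+e)) := by
      rw [ih, Finset.mul_sum]
      refine Finset.sum_congr rfl fun k hk => ?_
      have : p + 1 - k = (p - k) + 1 := by simp at hk; omega
      rw [this]; ring
    have h2 : qQ (2*(p+1)+e) = qQ (p+e+1) + Polynomial.X^(p+e+1+1) * qQ p := by
      rw [← qQ_add]; congr 1; ring
    rw [h1, h2, qQ_succ' p, show p+1+e = p+e+1 by ring, Nat.sub_self, qQ_succ (p+e)]; ring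

theorem qQ_coeff (p n : ℕ) : (qQ p).coeff n = if n ≤ p then 1 else 0 := by
  unfold qQ; simp [Polynomial.coeff_X_pow]

theorem qQ_mid (A B j M : ℕ) (h : A + B + 2 * j = 2 * M) :
    ((1 - Polynomial.X) * (Polynomial.X^j * (qQ A * qQ B))).coeff M = if A = B then 1 else 0 := by
  have h0 : (1 - Polynomial.X) * qQ A = 1 - Polynomial.X^(A+1) := by
    unfold qQ; rw [mul_comm]; exact geom_sum_mul_neg Polynomial.X (A+1)
  have h1 : (1 - Polynomial.X) * (Polynomial.X^j * (qQ A * qQ B)) = Polynomial.X^j * (qQ B) - Polynomial.X^(j+(A+1)) * qQ B := by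
    linear_combination (Polynomial.X^j * qQ B) * h0
  rw [h1, Polynomial.coeff_sub, Polynomial.coeff_X_pow_mul', Polynomial.coeff_X_pow_mul', qQ_coeff, qQ_coeff]
  split_ifs <;> omega

theorem qQ_four (p r e f N : ℕ) (h : (p + (p + e)) + (r + (r + f)) = 2 * N) :
    ((1 - Polynomial.X) * (qQ p * qQ (p+e) * (qQ r * qQ (r+f)))).coeff N =
      ∑ k ∈ Finset.range (p+1), ∑ l ∈ Finset.range (r+1), if 2*k+e = 2*l+f then 1 else 0 := by
  rw [qQ_CG, qQ_CG, Finset.sum_mul_sum, Finset.mul_sum, Polynomial.finsetSum_coeff]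
  refine Finset.sum_congr rfl fun k hk => ?_
  rw [Finset.mul_sum, Polynomial.finsetSum_coeff]
  refine Finset.sum_congr rfl fun l hl => ?_
  simp at hk hl
  have e1 : Polynomial.X ^ (p - k) * qQ (2 * k + e) * (Polynomial.X ^ (r - l) * qQ (2 * l + f)) =
      Polynomial.X ^ (p-k+(r-l)) * (qQ (2*k+e) * qQ (2*l+f)) := by
    rw [pow_add]; ring
  rw [e1]
  exact qQ_mid (2*k+e) (2*l+f) (p-k+(r-l)) N (by omega)

def boxW (p q r s c : ℕ) : ℕ :=
  (((Finset.range (p+1)) ×ˢ (Finset.range (q+1)) ×ˢ (Finset.range (r+1)) ×ˢ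
    (Finset.range (s+1))).filter (fun x => x.1 + x.2.1 + x.2.2.1 + x.2.2.2 = c)).card

theorem boxW_eq (p q r s c : ℕ) : (boxW p q r s c : ℤ) = (qQ p * qQ q * (qQ r * qQ s)).coeff c := by
  unfold boxW qQ
  rw [Finset.card_filter, Finset.sum_product, Finset.sum_mul_sum, Finset.sum_mul_sum,
    Finset.sum_mul, Polynomial.finsetSum_coeff]
  push_cast
  refine Finset.sum_congr rfl fun i _ => ?_
  rw [Finset.sum_product, Finset.sum_mul, Polynomial.finsetSum_coeff]
  refine Finset.sum_congr rfl fun j _ => ?_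
  rw [Finset.sum_product, Finset.mul_sum, Polynomial.finsetSum_coeff]
  refine Finset.sum_congr rfl fun k _ => ?_
  rw [Finset.mul_sum, Polynomial.finsetSum_coeff]
  refine Finset.sum_congr rfl fun l _ => ?_
  rw [← pow_add, ← pow_add, ← pow_add, Polynomial.coeff_X_pow]
  simp only [eq_comm, add_assoc]

theorem boxW_diff (p r e f N : ℕ) (h : (p + (p + e)) + (r + (r + f)) = 2 * (N+1)) :
    (boxW p (p+e) r (r+f) (N+1) : ℤ) - boxW p (p+e) r (r+f) N =
      ∑ k ∈ Finset.range (p+1), ∑ l ∈ Finset.range (r+1), if 2*k+e = 2*l+f then 1 else 0 := by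
  rw [← qQ_four p r e f (N+1) h, boxW_eq, boxW_eq, sub_mul, one_mul, Polynomial.coeff_sub,
    Polynomial.coeff_X_mul]

theorem dsum0 (p r e : ℕ) : (∑ k ∈ Finset.range (p+1), ∑ l ∈ Finset.range (r+1),
    if 2*k+e = 2*l+e then (1:ℤ) else 0) = min p r + 1 := by
  have : ∀ k ∈ Finset.range (p+1), (∑ l ∈ Finset.range (r+1),
    if 2*k+e = 2*l+e then (1:ℤ) else 0) = if k ∈ Finset.range (r+1) then 1 else 0 := by
    intro k _
    refine Eq.trans ?_ (Finset.sum_ite_eq (Finset.range (r+1)) _ (fun _ => (1:ℤ)))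
    exact Finset.sum_congr rfl fun l _ => if_congr (by omega) rfl rfl
  rw [Finset.sum_congr rfl this, ← Finset.sum_filter, Finset.sum_const]
  have : (Finset.range (p+1)).filter (fun k => k ∈ Finset.range (r+1)) = Finset.range (min p r + 1) := by
    ext; simp
  rw [this]; simp

theorem dsum2 (p r : ℕ) : (∑ k ∈ Finset.range (p+1), ∑ l ∈ Finset.range (r+1),
    if 2*k+2 = 2*l+0 then (1:ℤ) else 0) = min (p+1) r := by
  have : ∀ k ∈ Finset.range (p+1), (∑ l ∈ Finset.range (r+1),
    if 2*k+2 = 2*l+0 then (1:ℤ) else 0) = if k+1 ∈ Finset.range (r+1) then 1 else 0 := by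
    intro k _
    refine Eq.trans ?_ (Finset.sum_ite_eq (Finset.range (r+1)) _ (fun _ => (1:ℤ)))
    exact Finset.sum_congr rfl fun l _ => if_congr (by omega) rfl rfl
  rw [Finset.sum_congr rfl this, ← Finset.sum_filter, Finset.sum_const]
  have : (Finset.range (p+1)).filter (fun k => k+1 ∈ Finset.range (r+1)) = Finset.range (min (p+1) r) := by
    ext; simp
  rw [this]; simp

/-- number of contingency tables -/
def tabT (d a b c : ℕ) : ℕ :=
  ∑ m ∈ Finset.range (min a b + 1), boxW m (d - a - b + m) (a - m) (b - m) c

def sMin (N : ℕ) : ℤ := ∑ m ∈ Finset.range (N+1), (min m (N-m) : ℕ)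

theorem sMin_step (N : ℕ) : sMin (N+2) = sMin N + N + 1 := by
  unfold sMin
  rw [Finset.sum_range_succ, Finset.sum_range_succ']
  have : ∀ k ∈ Finset.range (N+1), ((min (k+1) (N+2-(k+1)) : ℕ):ℤ) = (min k (N-k) : ℕ) + 1 := by
    intro k hk; simp at hk; omega
  rw [Finset.sum_congr rfl this, Finset.sum_add_distrib]; simp; ring

theorem sMin_diff (N : ℕ) : (sMin (2*N+1) - sMin (2*N) = N) ∧ (sMin (2*N+2) - sMin (2*N+1) = N+1) := by
  induction N with
  | zero => constructor <;> simp [sMin, Finset.sum_range_succ]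
  | succ n ih =>
    have h1 := sMin_step (2*n); have h2 := sMin_step (2*n+1); have h3 := sMin_step (2*n+2)
    rw [show 2*(n+1) = 2*n+2 by ring]
    push_cast at *
    constructor
    · rw [show 2*n+2+1 = 2*n+1+2 by ring]; linarith
    · rw [show 2*n+2+1 = 2*n+1+2 by ring, h2, h3]; linarith

theorem tabT_comb (N : ℕ) :
    ((tabT (2*(N+1)) (N+1) (N+1) (N+1) : ℤ) - tabT (2*(N+1)) (N+1) (N+1) N)
    - (tabT (2*(N+1)) N (N+1) (N+1) - tabT (2*(N+1)) N (N+1) N)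
    - (tabT (2*(N+1)) (N+1) N (N+1) - tabT (2*(N+1)) (N+1) N N)
    + (tabT (2*(N+1)) N N (N+1) - tabT (2*(N+1)) N N N) = 2 * (sMin (N+1) - sMin N) - N := by
  have h1 : (tabT (2*(N+1)) (N+1) (N+1) (N+1) : ℤ) - tabT (2*(N+1)) (N+1) (N+1) N
      = sMin (N+1) + (N + 2) := by
    unfold tabT sMin
    push_cast
    rw [← Finset.sum_sub_distrib, min_self]
    rw [Finset.sum_congr rfl (g := fun m => ((min m (N+1-m) : ℕ) : ℤ) + 1)]
    · rw [Finset.sum_add_distrib]; simp; ring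
    · intro m hm
      simp at hm
      have := boxW_diff m (N+1-m) 0 0 N (by omega)
      rw [dsum0] at this
      rw [show 2*(N+1)-(N+1)-(N+1)+m = m+0 by omega]
      simp only [add_zero] at this ⊢
      rw [this]
  have h2 : (tabT (2*(N+1)) N (N+1) (N+1) : ℤ) - tabT (2*(N+1)) N (N+1) N
      = sMin N + (N + 1) := by
    unfold tabT sMin
    push_cast
    rw [← Finset.sum_sub_distrib, min_eq_left (by omega)]
    rw [Finset.sum_congr rfl (g := fun m => ((min m (N-m) : ℕ) : ℤ) + 1)]
    · rw [Finset.sum_add_distrib]; simp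
    · intro m hm
      simp at hm
      have := boxW_diff m (N-m) 1 1 N (by omega)
      rw [dsum0] at this
      rw [show 2*(N+1)-N-(N+1)+m = m+1 by omega, show N+1-m = N-m+1 by omega, this]
      try simp
  have sw : ∀ p q r s c, boxW p q r s c = boxW p q s r c := by
    intro p q r s c
    zify; rw [boxW_eq, boxW_eq, mul_comm (qQ r)]
  have h3 : ∀ c, tabT (2*(N+1)) (N+1) N c = tabT (2*(N+1)) N (N+1) c := by
    intro c
    unfold tabT
    rw [min_comm, show 2*(N+1)-(N+1)-N = 2*(N+1)-N-(N+1) by omega]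
    exact Finset.sum_congr rfl fun m _ => sw _ _ _ _ _
  have h4 : (tabT (2*(N+1)) N N (N+1) : ℤ) - tabT (2*(N+1)) N N N
      = sMin (N+1) := by
    unfold tabT sMin
    push_cast
    rw [← Finset.sum_sub_distrib, min_self, Finset.sum_range_succ' _ (N+1)]
    rw [show min ((0:ℕ):ℤ) ((N+1-0:ℕ):ℤ) = 0 by omega, add_zero]
    · refine Finset.sum_congr rfl ?_
      intro m hm
      simp at hm
      have := boxW_diff m (N-m) 2 0 N (by omega)
      rw [dsum2] at this
      rw [show 2*(N+1)-N-N+m = m+2 by omega]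
      simp only [add_zero] at this ⊢
      rw [this]; simp
  rw [h3, h3, h1, h2, h4]; ring

theorem tabT_odd (k : ℕ) : 2 * (sMin (2*k+1) - sMin (2*k)) - ((2*k : ℕ) : ℤ) = 0 := by
  rw [(sMin_diff k).1]; push_cast; ring
theorem tabT_even (k : ℕ) : 2 * (sMin (2*k+1+1) - sMin (2*k+1)) - ((2*k+1 : ℕ) : ℤ) = 1 := by
  rw [(sMin_diff k).2]; push_cast; ring

def cntF {α C : Type} [Fintype α] [DecidableEq C] (f : α → C) (c : C) : ℕ :=
  (Finset.univ.filter (fun a => f a = c)).card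

theorem cntF_sum {α C : Type} [Fintype α] [DecidableEq C] [Fintype C] (f : α → C) :
    ∑ c, cntF f c = Fintype.card α := by
  unfold cntF
  rw [← Finset.card_eq_sum_card_fiberwise (t := Finset.univ) (by intro x _; simp)]
  rfl

theorem cntF_surj {α C : Type} [Fintype α] [DecidableEq C] [Fintype C] (n : C → ℕ)
    (h : ∑ c, n c = Fintype.card α) : ∃ f : α → C, cntF f = n := by
  have e : α ≃ (Σ c, Fin (n c)) := Fintype.equivOfCardEq (by simp [h])
  refine ⟨fun a => (e a).1, ?_⟩
  funext c
  unfold cntF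
  rw [← Fintype.card_subtype]
  rw [← Fintype.card_fin (n c)]
  refine Fintype.card_congr ?_
  exact (e.subtypeEquiv (q := fun x => x.1 = c) (fun a => Iff.rfl)).trans
    { toFun := fun x => x.2 ▸ x.1.2
      invFun := fun y => ⟨⟨c, y⟩, rfl⟩
      left_inv := by rintro ⟨⟨c, y⟩, rfl⟩; rfl
      right_inv := fun y => rfl }

theorem cntF_comp {α C : Type} [Fintype α] [DecidableEq C] (f : α → C) (σ : Equiv.Perm α) :
    cntF (f ∘ σ) = cntF f := by
  funext c
  unfold cntF
  exact Finset.card_equiv σ (by simp)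

theorem cntF_exists {α C : Type} [Fintype α] [DecidableEq C] (f g : α → C) (h : cntF f = cntF g) :
    ∃ τ : Equiv.Perm α, g ∘ τ = f := by
  have : ∀ c, Nonempty ({a // f a = c} ≃ {a // g a = c}) := by
    intro c
    rw [← Fintype.card_eq, Fintype.card_subtype, Fintype.card_subtype]
    exact congrFun h c
  exact ⟨Equiv.ofFiberEquiv (fun c => (this c).some), funext fun a => Equiv.ofFiberEquiv_map _ a⟩

theorem orbit_one {α C : Type} [Fintype α] [DecidableEq α] [DecidableEq C] [Fintype C] (f₀ : α → C) :
    ∑ σ : Equiv.Perm α, (Finset.univ.filter (fun f : α → C => cntF f = cntF f₀ ∧ f ∘ σ = f)).card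
      = (Fintype.card α).factorial := by
  simp_rw [Finset.card_filter]
  rw [Finset.sum_comm]
  have : ∀ f : α → C, (∑ σ : Equiv.Perm α, if cntF f = cntF f₀ ∧ f ∘ σ = f then 1 else 0) =
      ∑ σ : Equiv.Perm α, if f = f₀ ∘ σ then (1:ℕ) else 0 := by
    intro f
    by_cases h : cntF f = cntF f₀
    · obtain ⟨τ, rfl⟩ := cntF_exists f f₀ h
      refine Fintype.sum_equiv (Equiv.mulLeft τ) _ _ fun σ => ?_
      refine if_congr ?_ rfl rfl
      simp only [h, true_and, Equiv.coe_mulLeft, Equiv.Perm.coe_mul, Function.comp_assoc]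
      exact eq_comm
    · simp only [h, false_and, if_false]
      rw [Finset.sum_const_zero]
      symm
      refine Finset.sum_eq_zero fun σ _ => if_neg ?_
      rintro rfl
      exact h (cntF_comp _ _)
  simp_rw [this]
  rw [Finset.sum_comm]
  simp [Fintype.card_perm]

theorem orbit_count {α C : Type} [Fintype α] [DecidableEq α] [DecidableEq C] [Fintype C]
    (P : (C → ℕ) → Prop) [DecidablePred P] :
    ∑ σ : Equiv.Perm α, (Finset.univ.filter (fun f : α → C => P (cntF f) ∧ f ∘ σ = f)).card
      = (Fintype.card α).factorial *
        ((Finset.piAntidiag (Finset.univ : Finset C) (Fintype.card α)).filter P).card := by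
  set S := (Finset.piAntidiag (Finset.univ : Finset C) (Fintype.card α)).filter P with hS
  have h1 : ∀ σ : Equiv.Perm α,
      (Finset.univ.filter (fun f : α → C => P (cntF f) ∧ f ∘ σ = f)).card =
      ∑ n ∈ S, (Finset.univ.filter (fun f : α → C => cntF f = n ∧ f ∘ σ = f)).card := by
    intro σ
    rw [Finset.card_eq_sum_card_fiberwise (f := fun f : α → C => cntF f) (t := S)]
    · refine Finset.sum_congr rfl fun n hn => ?_
      congr 1
      ext f
      simp [hS] at hn ⊢
      constructor
      · rintro ⟨⟨a, b⟩, c⟩; exact ⟨c, b⟩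
      · rintro ⟨rfl, b⟩; exact ⟨⟨hn.2, b⟩, rfl⟩
    · intro f hf
      simp [hS] at hf ⊢
      exact ⟨cntF_sum f, hf.1⟩
  simp_rw [h1]
  rw [Finset.sum_comm]
  rw [Finset.sum_congr rfl (g := fun _ => (Fintype.card α).factorial)]
  · simp [mul_comm]
  · intro n hn
    simp [hS] at hn
    obtain ⟨f₀, rfl⟩ := cntF_surj (α := α) n hn.1
    exact orbit_one f₀


def margP (a b c : ℕ) (n : Bool × Bool × Bool → ℕ) : Prop :=
  (∑ x with x.1 = true, n x = a) ∧ (∑ x with x.2.1 = true, n x = b) ∧ (∑ x with x.2.2 = true, n x = c)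

instance (a b c : ℕ) : DecidablePred (margP a b c) := fun n => by unfold margP; infer_instance

theorem cntF_map {α C D : Type} [Fintype α] [DecidableEq C] [Fintype C] [DecidableEq D] (f : α → C)
    (p : C → D) (k : D) : cntF (p ∘ f) k = ∑ c with p c = k, cntF f c := by
  unfold cntF
  rw [Finset.card_eq_sum_card_fiberwise (f := f) (t := Finset.univ.filter (fun c => p c = k))]
  · refine Finset.sum_congr rfl fun c hc => ?_
    congr 1
    ext a
    simp at hc ⊢
    rintro rfl; exact hc
  · intro a ha; simpa using ha

def fixN (d k : ℕ) (σ : Equiv.Perm (Fin d)) : ℕ :=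
  (Finset.univ.filter (fun f : Fin d → Bool => cntF f true = k ∧ f ∘ σ = f)).card

theorem fixN_prod (d a b c : ℕ) (σ : Equiv.Perm (Fin d)) :
    fixN d a σ * fixN d b σ * fixN d c σ =
    (Finset.univ.filter (fun f : Fin d → Bool × Bool × Bool =>
      margP a b c (cntF f) ∧ f ∘ σ = f)).card := by
  unfold fixN
  rw [mul_assoc, ← Finset.card_product, ← Finset.card_product]
  refine Finset.card_nbij' (fun t i => (t.1 i, t.2.1 i, t.2.2 i))
    (fun F => (fun i => (F i).1, fun i => (F i).2.1, fun i => (F i).2.2)) ?_ ?_ ?_ ?_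
  · rintro ⟨f, g, h⟩ hx
    simp only [Finset.coe_product, Finset.coe_filter, Finset.mem_univ, true_and, Set.mem_prod, Set.mem_ofPred_eq] at hx ⊢
    obtain ⟨⟨h1, h2⟩, ⟨h3, h4⟩, h5, h6⟩ := hx
    refine ⟨⟨?_, ?_, ?_⟩, ?_⟩
    · rw [← cntF_map]; exact h1
    · rw [← cntF_map _ (fun x : Bool × Bool × Bool => x.2.1)]; exact h3
    · rw [← cntF_map _ (fun x : Bool × Bool × Bool => x.2.2)]; exact h5
    · funext i
      exact Prod.ext (congrFun h2 i) (Prod.ext (congrFun h4 i) (congrFun h6 i))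
  · rintro F hx
    simp only [Finset.coe_product, Finset.coe_filter, Finset.mem_univ, true_and, Set.mem_prod, Set.mem_ofPred_eq] at hx ⊢
    obtain ⟨⟨h1, h2, h3⟩, h4⟩ := hx
    rw [← cntF_map _ (fun x : Bool × Bool × Bool => x.1)] at h1
    rw [← cntF_map _ (fun x : Bool × Bool × Bool => x.2.1)] at h2
    rw [← cntF_map _ (fun x : Bool × Bool × Bool => x.2.2)] at h3
    refine ⟨⟨h1, ?_⟩, ⟨h2, ?_⟩, h3, ?_⟩
    · funext i; exact congrArg (fun x => x.1) (congrFun h4 i)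
    · funext i; exact congrArg (fun x => x.2.1) (congrFun h4 i)
    · funext i; exact congrArg (fun x => x.2.2) (congrFun h4 i)
  · rintro ⟨f, g, h⟩ _; rfl
  · rintro F _; rfl

def mkN (d a b : ℕ) (x : Σ _ : ℕ, ℕ × ℕ × ℕ × ℕ) : Bool × Bool × Bool → ℕ
  | (true, true, true) => x.2.1
  | (true, true, false) => x.1 - x.2.1
  | (false, false, true) => x.2.2.1
  | (false, false, false) => d - a - b + x.1 - x.2.2.1
  | (true, false, true) => x.2.2.2.1
  | (true, false, false) => a - x.1 - x.2.2.2.1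
  | (false, true, true) => x.2.2.2.2
  | (false, true, false) => b - x.1 - x.2.2.2.2

theorem sum8 (n : Bool × Bool × Bool → ℕ) : ∑ x, n x = n (true,true,true) + n (true,true,false)
   + n (true,false,true) + n (true,false,false) + n (false,true,true) + n (false,true,false)
   + n (false,false,true) + n (false,false,false) := by
  simp [Fintype.sum_prod_type]; ring

theorem margP_iff (a b c : ℕ) (n : Bool × Bool × Bool → ℕ) : margP a b c n ↔
   n (true,true,true) + n (true,true,false) + n (true,false,true) + n (true,false,false) = a ∧
   n (true,true,true) + n (true,true,false) + n (false,true,true) + n (false,true,false) = b ∧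
   n (true,true,true) + n (true,false,true) + n (false,true,true) + n (false,false,true) = c := by
  unfold margP
  simp only [Finset.sum_filter, sum8]
  simp

theorem tab_card (d a b c : ℕ) (h : a + b ≤ d) :
    ((Finset.piAntidiag (Finset.univ : Finset (Bool × Bool × Bool)) d).filter (margP a b c)).card
      = tabT d a b c := by
  unfold tabT boxW
  rw [← Finset.card_sigma]
  refine Finset.card_nbij' (fun n => ⟨n (true,true,true) + n (true,true,false),
    n (true,true,true), n (false,false,true), n (true,false,true), n (false,true,true)⟩)
    (mkN d a b) ?_ ?_ ?_ ?_
  · intro n hn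
    simp [sum8, margP_iff] at hn ⊢
    omega
  · rintro ⟨m, i, j, k, l⟩ hx
    simp [sum8, margP_iff, mkN] at hx ⊢
    omega
  · intro n hn
    simp [sum8, margP_iff] at hn
    funext ⟨x, y, z⟩
    cases x <;> cases y <;> cases z <;> simp [mkN] <;> omega
  · rintro ⟨m, i, j, k, l⟩ hx
    simp at hx
    have : i + (m - i) = m := by omega
    simp [mkN, this]

theorem fixN_sum (d a b c : ℕ) (h : a + b ≤ d) :
    ∑ σ : Equiv.Perm (Fin d), fixN d a σ * fixN d b σ * fixN d c σ = d.factorial * tabT d a b c := by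
  simp_rw [fixN_prod]
  rw [orbit_count, Fintype.card_fin, tab_card _ _ _ _ h]

theorem fixN_comb (N : ℕ) :
    (∑ σ : Equiv.Perm (Fin (2*(N+1))), ((fixN (2*(N+1)) (N+1) σ : ℤ) - fixN (2*(N+1)) N σ) *
      ((fixN (2*(N+1)) (N+1) σ : ℤ) - fixN (2*(N+1)) N σ) *
      ((fixN (2*(N+1)) (N+1) σ : ℤ) - fixN (2*(N+1)) N σ))
    = ((2*(N+1)).factorial : ℤ) * (2 * (sMin (N+1) - sMin N) - N) := by
  have H : ∀ a b c, a + b ≤ 2*(N+1) → ∑ σ : Equiv.Perm (Fin (2*(N+1))),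
      ((fixN (2*(N+1)) a σ : ℤ) * fixN (2*(N+1)) b σ * fixN (2*(N+1)) c σ)
      = ((2*(N+1)).factorial : ℤ) * tabT (2*(N+1)) a b c := by
    intro a b c h; exact_mod_cast fixN_sum _ a b c h
  rw [← tabT_comb]
  simp only [mul_sub (((2*(N+1)).factorial : ℕ) : ℤ), mul_add (((2*(N+1)).factorial : ℕ) : ℤ)]
  rw [← H _ _ _ (by omega), ← H _ _ _ (by omega), ← H _ _ _ (by omega), ← H _ _ _ (by omega),
    ← H _ _ _ (by omega), ← H _ _ _ (by omega), ← H _ _ _ (by omega), ← H _ _ _ (by omega)]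
  simp only [← Finset.sum_sub_distrib, ← Finset.sum_add_distrib]
  refine Finset.sum_congr rfl fun σ _ => ?_
  ring

open Equiv.Perm in
theorem perm_quot_prod {M : Type} [CommMonoid M] {α : Type} [Fintype α] [DecidableEq α]
    (σ : Equiv.Perm α) [Fintype (Quotient (SameCycle.setoid σ))]
    [DecidableEq (Quotient (SameCycle.setoid σ))] (φ : ℕ → M) :
    ∏ q : Quotient (SameCycle.setoid σ),
      φ (Finset.univ.filter (fun x : α => (Quotient.mk _ x : Quotient (SameCycle.setoid σ)) = q)).card
    = (σ.cycleType.map φ).prod * φ 1 ^ (Fintype.card α - σ.cycleType.sum) := by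
  classical
  have hq : ∀ x y : α, (Quotient.mk (SameCycle.setoid σ) x = Quotient.mk _ y) ↔ SameCycle σ x y :=
    fun x y => Quotient.eq
  have himg : (Finset.univ : Finset (Quotient (SameCycle.setoid σ))) =
      (σ.support.image (Quotient.mk _)) ∪ (σ.supportᶜ.image (Quotient.mk _)) := by
    rw [← Finset.image_union, Finset.union_compl]
    exact (Finset.image_univ_of_surjective Quotient.mk_surjective).symm
  have hfix : ∀ x y, x ∉ σ.support → SameCycle σ x y → x = y := by
    intro x y hx hxy
    rw [notMem_support] at hx
    exact (hxy.eq_of_left hx)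
  have hdis : Disjoint (σ.support.image (Quotient.mk (SameCycle.setoid σ)))
      (σ.supportᶜ.image (Quotient.mk _)) := by
    rw [Finset.disjoint_left]
    intro q h1 h2
    simp only [Finset.mem_image, Finset.mem_compl] at h1 h2
    obtain ⟨x, hx, rfl⟩ := h1
    obtain ⟨y, hy, h⟩ := h2
    have := hfix y x hy ((hq _ _).1 h)
    exact hy (this ▸ hx)
  rw [himg, Finset.prod_union hdis]
  congr 1
  · rw [cycleType_def, Multiset.map_map]
    change _ = ∏ c ∈ σ.cycleFactorsFinset, φ (c.support.card)
    have h1 : σ.cycleFactorsFinset = σ.support.image (cycleOf σ) := by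
      ext c
      simp only [Finset.mem_image]
      constructor
      · intro hc
        obtain ⟨x, hx⟩ := (mem_cycleFactorsFinset_iff.1 hc).1.nonempty_support
        exact ⟨x, mem_cycleFactorsFinset_support_le hc hx, (cycle_is_cycleOf hx hc).symm⟩
      · rintro ⟨x, hx, rfl⟩
        exact cycleOf_mem_cycleFactorsFinset_iff.2 hx
    let L : Quotient (SameCycle.setoid σ) → Equiv.Perm α :=
      Quotient.lift (cycleOf σ) (fun x y h => SameCycle.cycleOf_eq h)
    refine Finset.prod_nbij L ?_ ?_ ?_ ?_
    · intro q hq'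
      simp only [Finset.mem_image] at hq'
      obtain ⟨x, hx, rfl⟩ := hq'
      exact cycleOf_mem_cycleFactorsFinset_iff.2 hx
    · intro q hq1 r hr1 h
      simp only [Finset.coe_image, Set.mem_image, Finset.mem_coe] at hq1 hr1
      obtain ⟨x, hx, rfl⟩ := hq1
      obtain ⟨y, hy, rfl⟩ := hr1
      rw [hq]
      exact (sameCycle_iff_cycleOf_eq_of_mem_support hx hy).2 h
    · intro c hc
      rw [h1] at hc
      simp only [Finset.coe_image, Set.mem_image, Finset.mem_coe] at hc ⊢
      obtain ⟨x, hx, rfl⟩ := hc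
      exact ⟨_, ⟨x, hx, rfl⟩, rfl⟩
    · intro q hq'
      simp only [Finset.mem_image] at hq'
      obtain ⟨x, hx, rfl⟩ := hq'
      congr 2
      ext y
      change _ ↔ y ∈ (cycleOf σ x).support
      rw [mem_support_cycleOf_iff, Finset.mem_filter, hq]
      simp only [Finset.mem_univ, true_and, hx, and_true]
      exact sameCycle_comm
  · rw [Finset.prod_image]
    · rw [sum_cycleType, ← Finset.card_compl]
      refine Finset.prod_eq_pow_card ?_
      intro x hx
      congr 1
      rw [Finset.card_eq_one]
      refine ⟨x, ?_⟩
      ext y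
      simp only [Finset.mem_filter, Finset.mem_univ, true_and, Finset.mem_singleton, hq]
      constructor
      · intro h; exact (hfix x y (by simpa using hx) h.symm).symm
      · rintro rfl; exact SameCycle.refl _ _
    · intro x hx y hy h
      exact hfix x y (by simpa using hx) ((hq _ _).1 h)

theorem perm_fixed_sum {R : Type} [CommRing R] {α K : Type} [Fintype α] [DecidableEq α] [Fintype K]
    [DecidableEq K] (σ : Equiv.Perm α) (v : K → R) :
    (σ.cycleType.map (fun r => ∑ k, v k ^ r)).prod *
      (∑ k, v k ^ 1) ^ (Fintype.card α - σ.cycleType.sum)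
    = ∑ f : α → K with f ∘ σ = f, ∏ i, v (f i) := by
  classical
  rw [← perm_quot_prod σ (fun r => ∑ k, v k ^ r), Finset.prod_univ_sum]
  have hinv : ∀ f : α → K, f ∘ σ = f → ∀ x y, Equiv.Perm.SameCycle σ x y → f x = f y := by
    intro f hf x y hxy
    obtain ⟨n, rfl⟩ := hxy.exists_nat_pow_eq
    clear hxy
    induction n with
    | zero => rfl
    | succ n ih => rw [ih, pow_succ', Equiv.Perm.mul_apply]; exact (congrFun hf _).symm
  refine Finset.sum_bij' (fun g _ x => g (Quotient.mk _ x))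
    (fun f hf => Quotient.lift f (fun x y h => hinv f (by simpa using hf) x y h)) ?_ ?_ ?_ ?_ ?_
  · intro g _
    simp only [Finset.mem_filter, Finset.mem_univ, true_and]
    funext x
    simp only [Function.comp]
    congr 1
    exact Quotient.sound (Equiv.Perm.sameCycle_apply_left.2 (Equiv.Perm.SameCycle.refl _ _))
  · intro f hf; simp
  · intro g _
    funext q
    induction q using Quotient.inductionOn with
    | h x => rfl
  · intro f hf; rfl
  · intro g _
    rw [← Finset.prod_fiberwise (s := Finset.univ) (g := fun x => Quotient.mk (Equiv.Perm.SameCycle.setoid σ) x)]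
    refine Finset.prod_congr rfl fun q _ => ?_
    symm
    refine Finset.prod_eq_pow_card ?_
    intro x hx
    simp only [Finset.mem_filter, Finset.mem_univ, true_and] at hx
    simp only [hx]

theorem permPowSum_eq (d : ℕ) (σ : Equiv.Perm (Fin d)) :
    permPowSum d σ = ∑ f : Fin d → Fin d with f ∘ σ = f, ∏ i, X (f i) := by
  rw [← perm_fixed_sum, Fintype.card_fin]; rfl

theorem prod_X_eq (d : ℕ) (f : Fin d → Fin d) :
    (∏ i, X (f i) : MvPolynomial (Fin d) ℤ) = monomial (∑ i, Finsupp.single (f i) 1) 1 := by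
  rw [monomial_sum_one]; rfl

theorem permPowSum_coeff (d : ℕ) (σ : Equiv.Perm (Fin d)) (α : Fin d →₀ ℕ) :
    coeff α (permPowSum d σ) =
      ((Finset.univ.filter (fun f : Fin d → Fin d => cntF f = α ∧ f ∘ σ = f)).card : ℤ) := by
  rw [permPowSum_eq, coeff_sum, Finset.card_filter, Finset.sum_filter]
  push_cast
  refine Finset.sum_congr rfl fun f _ => ?_
  have h : (∑ i, Finsupp.single (f i) 1 = α) ↔ cntF f = α := by
    rw [← DFunLike.coe_fn_eq]
    have : (⇑(∑ i, Finsupp.single (f i) 1) : Fin d → ℕ) = cntF f := by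
      funext k
      rw [Finsupp.finsetSum_apply]
      unfold cntF
      rw [Finset.card_filter]
      exact Finset.sum_congr rfl fun i _ => Finsupp.single_apply
    rw [this]
  rw [prod_X_eq, coeff_monomial]
  by_cases h1 : f ∘ σ = f <;> simp [h1, h]

theorem coeff_two (d k : ℕ) (σ : Equiv.Perm (Fin d)) (α : Fin d →₀ ℕ) (i0 i1 : Fin d) (hne : i0 ≠ i1)
    (h0 : α i0 + k = d) (h1 : α i1 = k) (h2 : ∀ j, j ≠ i0 → j ≠ i1 → α j = 0) :
    coeff α (permPowSum d σ) = (fixN d k σ : ℤ) := by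
  rw [permPowSum_coeff]
  unfold fixN
  norm_cast
  have key : ∀ f : Fin d → Fin d, cntF f = α → ∀ i, f i = i0 ∨ f i = i1 := by
    intro f hf i
    by_contra! hc
    have := h2 _ hc.1 hc.2
    rw [← hf] at this
    unfold cntF at this
    rw [Finset.card_eq_zero] at this
    have h : i ∈ Finset.univ.filter (fun a => f a = f i) := by simp
    rw [this] at h; simp at h
  refine Finset.card_nbij' (fun f i => decide (f i = i1)) (fun g i => if g i = true then i1 else i0)
    ?_ ?_ ?_ ?_
  · intro f hf
    simp only [Finset.coe_filter, Finset.mem_univ, true_and, Set.mem_ofPred_eq] at hf ⊢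
    refine ⟨?_, ?_⟩
    · rw [← h1, ← hf.1]; simp [cntF]
    · funext i
      have := congrFun hf.2 i
      simp only [Function.comp] at this ⊢
      rw [this]
  · intro g hg
    simp only [Finset.coe_filter, Finset.mem_univ, true_and, Set.mem_ofPred_eq] at hg ⊢
    refine ⟨?_, ?_⟩
    · have hs : cntF g true + cntF g false = d := by
        have := cntF_sum g
        simpa using this
      funext j
      by_cases hj1 : j = i1
      · subst hj1
        rw [h1, ← hg.1]
        unfold cntF
        congr 1; ext i
        cases hgi : g i <;> simp [hgi, hne]
      · by_cases hj0 : j = i0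
        · subst hj0
          have : cntF (fun i => if g i = true then i1 else j) j = cntF g false := by
            unfold cntF
            congr 1; ext i
            cases hgi : g i <;> simp [hgi, hne.symm]
          omega
        · rw [h2 j hj0 hj1]
          unfold cntF
          rw [Finset.card_eq_zero, Finset.filter_eq_empty_iff]
          intro i _
          cases hgi : g i <;> simp [hgi, Ne.symm hj0, Ne.symm hj1]
    · funext i
      have := congrFun hg.2 i
      simp only [Function.comp] at this ⊢
      rw [this]
  · intro f hf
    simp only [Finset.coe_filter, Finset.mem_univ, true_and, Set.mem_ofPred_eq] at hf
    funext i
    rcases key f hf.1 i with h | h <;> simp [h, hne]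
  · intro g hg
    funext i
    cases hgi : g i <;> simp [hgi, hne]

noncomputable def expW (d : ℕ) (w : Equiv.Perm (Fin d)) : Fin d →₀ ℕ :=
  Finsupp.equivFunOnFinite.symm (fun j => (w j.rev : ℕ))

theorem vandermonde_eq (d : ℕ) : vandermonde d =
    ∑ w : Equiv.Perm (Fin d), monomial (expW d w) ((Equiv.Perm.sign w : ℤ)) := by
  have h1 : vandermonde d =
      (Matrix.vandermonde (fun i : Fin d => (X i.rev : MvPolynomial (Fin d) ℤ))).det := by
    rw [Matrix.det_vandermonde]
    unfold vandermonde
    rw [Finset.prod_sigma']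
    refine Finset.prod_bij' (fun p _ => ⟨p.2.rev, p.1.rev⟩) (fun s _ => (s.2.rev, s.1.rev))
      ?_ ?_ ?_ ?_ ?_
    · intro p hp; simpa using hp
    · intro s hs; simpa using hs
    · intro p hp; simp
    · intro s hs; simp
    · intro p hp; simp
  rw [h1, ← Matrix.det_transpose, Matrix.det_apply']
  refine Finset.sum_congr rfl fun w _ => ?_
  have h2 : (∏ i, (Matrix.vandermonde (fun i : Fin d => (X i.rev : MvPolynomial (Fin d) ℤ))).transpose (w i) i)
      = monomial (expW d w) 1 := by
    rw [monomial_eq, Finsupp.prod_fintype _ _ (by simp)]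
    simp only [Matrix.transpose_apply, Matrix.vandermonde_apply, C_1, one_mul]
    refine Fintype.prod_equiv Fin.revPerm _ _ fun i => ?_
    simp [expW]
  rw [h2]
  rw [← mul_one ((Equiv.Perm.sign w : ℤˣ) : ℤ), ← C_mul_monomial]
  simp

theorem perm_low (d : ℕ) (w : Equiv.Perm (Fin d)) (h : ∀ i : Fin d, i.val + 2 < d → w i ≤ i) :
    ∀ m, ∀ i : Fin d, i.val = m → m + 2 < d → w i = i := by
  intro m
  induction m using Nat.strong_induction_on with
  | _ m ih =>
    intro i hi hm
    by_contra hne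
    have h1 : w i < i := lt_of_le_of_ne (h i (by omega)) hne
    have h2 := ih (w i).val (by rw [← hi]; exact h1) (w i) rfl (by
      have : (w i).val < i.val := h1
      omega)
    exact hne (w.injective h2)

theorem chi_eq_aux (N d : ℕ) (hd : d = 2*(N+1)) (σ : Equiv.Perm (Fin d)) :
    chi d (twoRow (N+1)) σ = (fixN d (N+1) σ : ℤ) - fixN d N σ := by
  set i0 : Fin d := ⟨0, by omega⟩ with hi0
  set i1 : Fin d := ⟨1, by omega⟩ with hi1
  set u : Fin d := ⟨d-1, by omega⟩ with hu
  set v : Fin d := ⟨d-2, by omega⟩ with hv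
  have huv : u ≠ v := by
    intro h; have := congrArg Fin.val h; simp [hu, hv] at this; omega
  have hne : i0 ≠ i1 := by
    intro h; have := congrArg Fin.val h; simp [hi0, hi1] at this
  have hr0 : i0.rev = u := by apply Fin.ext; simp [hi0, hu, Fin.val_rev]
  have hr1 : i1.rev = v := by apply Fin.ext; simp [hi1, hv, Fin.val_rev]
  have hst : ∀ j : Fin d, staircase d (twoRow (N+1)) j =
      (if j.val < 2 then N+1 else 0) + (d - 1 - j.val) := fun j => rfl
  have hex : ∀ w (j : Fin d), expW d w j = (w j.rev : ℕ) := fun w j => rfl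
  unfold chi
  rw [vandermonde_eq, Finset.sum_mul, coeff_sum]
  simp only [coeff_monomial_mul']
  rw [← Finset.sum_subset (Finset.subset_univ {1, Equiv.swap u v})]
  · rw [Finset.sum_pair]
    · have hswu : Equiv.swap u v u = v := Equiv.swap_apply_left _ _
      have hswv : Equiv.swap u v v = u := Equiv.swap_apply_right _ _
      have hsw : ∀ j : Fin d, j ≠ i0 → j ≠ i1 → Equiv.swap u v j.rev = j.rev := by
        intro j h0 h1
        refine Equiv.swap_apply_of_ne_of_ne ?_ ?_
        · rw [← hr0]; intro h; exact h0 (Fin.rev_injective h)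
        · rw [← hr1]; intro h; exact h1 (Fin.rev_injective h)
      have hge : ∀ j : Fin d, j ≠ i0 → j ≠ i1 → 2 ≤ j.val := by
        intro j h0 h1
        by_contra hc
        have : j.val = 0 ∨ j.val = 1 := by omega
        rcases this with h | h
        · exact h0 (Fin.ext h)
        · exact h1 (Fin.ext h)
      have s0 : staircase d (twoRow (N+1)) i0 = N + 1 + (d - 1) := by rw [hst]; simp [hi0]
      have s1 : staircase d (twoRow (N+1)) i1 = N + 1 + (d - 2) := by
        rw [hst]; simp [hi1]; omega
      have s2 : ∀ j : Fin d, j ≠ i0 → j ≠ i1 → staircase d (twoRow (N+1)) j = d - 1 - j.val := by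
        intro j h0 h1
        have := hge j h0 h1
        rw [hst, if_neg (by omega), zero_add]
      have a0 : expW d 1 i0 = d - 1 := by rw [hex, hr0]; rfl
      have a1 : expW d 1 i1 = d - 2 := by rw [hex, hr1]; rfl
      have a2 : ∀ j : Fin d, expW d 1 j = d - 1 - j.val := by
        intro j; rw [hex]; simp [Fin.val_rev]; omega
      have b0 : expW d (Equiv.swap u v) i0 = d - 2 := by rw [hex, hr0, hswu]
      have b1 : expW d (Equiv.swap u v) i1 = d - 1 := by rw [hex, hr1, hswv]
      have b2 : ∀ j : Fin d, j ≠ i0 → j ≠ i1 → expW d (Equiv.swap u v) j = d - 1 - j.val := by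
        intro j h0 h1; rw [hex, hsw j h0 h1]; simp [Fin.val_rev]; omega
      rw [if_pos, if_pos]
      · rw [coeff_two d (N+1) σ _ i0 i1 hne, coeff_two d N σ _ i0 i1 hne]
        · simp [Equiv.Perm.sign_swap huv]; ring
        · rw [Finsupp.tsub_apply, s0, b0]; omega
        · rw [Finsupp.tsub_apply, s1, b1]; omega
        · intro j h0 h1; rw [Finsupp.tsub_apply, s2 j h0 h1, b2 j h0 h1]; omega
        · rw [Finsupp.tsub_apply, s0, a0]; omega
        · rw [Finsupp.tsub_apply, s1, a1]; omega
        · intro j h0 h1; rw [Finsupp.tsub_apply, s2 j h0 h1, a2]; omega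
      · intro j
        by_cases h0 : j = i0
        · rw [h0, s0, b0]; omega
        · by_cases h1 : j = i1
          · rw [h1, s1, b1]; omega
          · rw [s2 j h0 h1, b2 j h0 h1]
      · intro j
        rw [a2, hst]; omega
    · intro h
      have := congrArg (fun w : Equiv.Perm (Fin d) => w u) h
      simp at this
      exact huv this
  · intro w _ hw
    rw [if_neg]
    intro hle
    apply hw
    have hlow := perm_low d w (by
      intro i hi
      have := hle i.rev
      rw [hst, hex, Fin.rev_rev, if_neg (by rw [Fin.val_rev]; omega), Fin.val_rev] at this
      change (w i).val ≤ i.val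
      omega)
    have hfix : ∀ i, i ≠ u → i ≠ v → w i = i := by
      intro i h1 h2
      refine hlow i.val i rfl ?_
      have h1' : i.val ≠ d - 1 := fun h => h1 (Fin.ext h)
      have h2' : i.val ≠ d - 2 := fun h => h2 (Fin.ext h)
      have := i.isLt
      omega
    have hmem : ∀ i, (i = u ∨ i = v) → (w i = u ∨ w i = v) := by
      intro i hi
      by_contra! hc
      have h1 := hfix (w i) hc.1 hc.2
      have h2 := w.injective h1
      rw [h2] at hc
      tauto
    simp only [Finset.mem_insert, Finset.mem_singleton]
    rcases hmem u (Or.inl rfl) with h | h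
    · left
      have h' : w v = v := by
        rcases hmem v (Or.inr rfl) with h' | h'
        · exact absurd (w.injective (h.trans h'.symm)) huv
        · exact h'
      ext i
      by_cases e1 : i = u
      · rw [e1, h]; rfl
      · by_cases e2 : i = v
        · rw [e2, h']; rfl
        · rw [hfix i e1 e2]; rfl
    · right
      have h' : w v = u := by
        rcases hmem v (Or.inr rfl) with h' | h'
        · exact h'
        · exact absurd (w.injective (h.trans h'.symm)) huv
      ext i
      by_cases e1 : i = u
      · rw [e1, h, Equiv.swap_apply_left]
      · by_cases e2 : i = v
        · rw [e2, h', Equiv.swap_apply_right]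
        · rw [hfix i e1 e2, Equiv.swap_apply_of_ne_of_ne e1 e2]

theorem chi_eq (N : ℕ) (σ : Equiv.Perm (Fin (2*(N+1)))) :
    chi (2*(N+1)) (twoRow (N+1)) σ = (fixN (2*(N+1)) (N+1) σ : ℤ) - fixN (2*(N+1)) N σ :=
  chi_eq_aux N _ rfl σ

theorem gKron_eq (N : ℕ) : gKron (2*(N+1)) (twoRow (N+1)) (twoRow (N+1)) (twoRow (N+1)) =
    2 * (sMin (N+1) - sMin N) - N := by
  unfold gKron
  simp only [chi_eq]
  rw [fixN_comb]
  exact Int.mul_ediv_cancel_left _ (by exact_mod_cast Nat.factorial_ne_zero _)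

theorem gKron_zero : gKron (2*0) (twoRow 0) (twoRow 0) (twoRow 0) = 1 := by
  have h : ∀ σ, chi (2*0) (twoRow 0) σ = 1 := by
    intro σ
    unfold chi
    have hs : staircase (2*0) (twoRow 0) = 0 := by ext i; exact i.elim0
    have h1 : σ = 1 := Equiv.ext fun i => i.elim0
    have hv : vandermonde (2*0) = 1 := by
      unfold vandermonde
      exact Finset.prod_eq_one fun p _ => p.1.elim0
    rw [hs, hv, h1]
    simp [permPowSum]
  unfold gKron
  simp [h]

/-- `g_{(N,N),(N,N)}^{(N,N)}` equals `0` for odd `N` and `1` for even `N`. -/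
theorem kron_NN (N : ℕ) :
    (Odd N → gKron (2 * N) (twoRow N) (twoRow N) (twoRow N) = 0) ∧
    (Even N → gKron (2 * N) (twoRow N) (twoRow N) (twoRow N) = 1) := by
  constructor
  · rintro ⟨k, rfl⟩
    rw [gKron_eq]; exact tabT_odd k
  · intro h
    rcases N with _ | M
    · exact gKron_zero
    · obtain ⟨k, rfl⟩ : ∃ k, M = 2*k+1 := by
        obtain ⟨r, hr⟩ := h
        exact ⟨r-1, by omega⟩
      rw [gKron_eq]; exact tabT_even k
end

section
/- The reduced Kronecker coefficient ḡ_{λμ}^ν vanishes unless the triangle inequalities hold: |ν| ≤ |λ|+|μ|, |μ| ≤ |λ|+|ν|, and |λ| ≤ |μ|+|ν| (the Murnaghan–Littlewood inequalities). Equivalently, if any of these fails, then for all sufficiently large d the Kronecker coefficient g_{λ[d],μ[d]}^{ν[d]} = 0. -/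
open MvPolynomial

namespace RKT

noncomputable def xg {d : ℕ} {ι : Type} [Fintype ι] (g : ι → Fin d) : MvPolynomial (Fin d) ℤ :=
  ∏ j, X (g j)

noncomputable def cnt {d : ℕ} {ι : Type} [Fintype ι] (g : ι → Fin d) : Fin d →₀ ℕ :=
  ∑ j, Finsupp.single (g j) 1

lemma xg_eq {d : ℕ} {ι : Type} [Fintype ι] (g : ι → Fin d) : xg g = monomial (cnt g) 1 := by
  unfold xg cnt
  rw [monomial_sum_one]
  rfl

lemma cnt_apply {d : ℕ} {ι : Type} [Fintype ι] (g : ι → Fin d) (i : Fin d) :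
    cnt g i = Fintype.card {j // g j = i} := by
  unfold cnt
  rw [Finsupp.finsetSum_apply, Fintype.card_subtype, Finset.card_filter]
  simp [Finsupp.single_apply]

lemma prod_sum_fiber {d : ℕ} {ι T : Type} [Fintype ι] [DecidableEq ι] [Fintype T] [DecidableEq T]
    (q : ι → T) (hq : Function.Surjective q) :
    ∏ t : T, powSum d (Fintype.card {x // q x = t}) =
      ∑ g : ι → Fin d with (∀ x y, q x = q y → g x = g y), xg g := by
  classical
  unfold powSum
  rw [Finset.prod_univ_sum]
  simp only [Fintype.piFinset_univ]
  refine Finset.sum_bij (fun h _ => h ∘ q) ?_ ?_ ?_ ?_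
  · intro h _
    simp only [Finset.mem_filter, Finset.mem_univ, true_and, Function.comp]
    intro x y hxy
    rw [hxy]
  · intro h _ h' _ hh
    exact hq.injective_comp_right hh
  · intro g hg
    simp only [Finset.mem_filter, Finset.mem_univ, true_and] at hg
    refine ⟨fun t => g (Function.surjInv hq t), Finset.mem_univ _, ?_⟩
    funext x
    exact hg _ _ (Function.surjInv_eq hq _)
  · intro h _
    unfold xg
    simp only [Function.comp]
    rw [← Fintype.prod_fiberwise' q (fun t => (X (h t) : MvPolynomial (Fin d) ℤ))]
    simp

noncomputable def qmap {d : ℕ} (σ : Equiv.Perm (Fin d)) (x : Fin d) :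
    {c // c ∈ σ.cycleFactorsFinset} ⊕ {x // σ x = x} :=
  if h : σ x = x then Sum.inr ⟨x, h⟩ else
    Sum.inl ⟨σ.cycleOf x, Equiv.Perm.cycleOf_mem_cycleFactorsFinset_iff.2
      (Equiv.Perm.mem_support.2 h)⟩

lemma qmap_inl {d : ℕ} (σ : Equiv.Perm (Fin d)) (x : Fin d) (c : {c // c ∈ σ.cycleFactorsFinset}) :
    qmap σ x = Sum.inl c ↔ x ∈ c.1.support := by
  unfold qmap
  split_ifs with h
  · simp only [reduceCtorEq, false_iff]
    intro hx
    exact Equiv.Perm.mem_support.1 (Equiv.Perm.mem_cycleFactorsFinset_support_le c.2 hx) h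
  · simp only [Sum.inl.injEq, Subtype.ext_iff]
    constructor
    · rintro hc
      rw [← hc, Equiv.Perm.mem_support_cycleOf_iff]
      exact ⟨Equiv.Perm.SameCycle.refl _ _, Equiv.Perm.mem_support.2 h⟩
    · intro hx
      exact (Equiv.Perm.cycle_is_cycleOf hx c.2).symm

lemma qmap_inr {d : ℕ} (σ : Equiv.Perm (Fin d)) (x : Fin d) (c : {x // σ x = x}) :
    qmap σ x = Sum.inr c ↔ x = c.1 := by
  unfold qmap
  split_ifs with h
  · simp [Subtype.ext_iff]
  · simp only [reduceCtorEq, false_iff]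
    rintro rfl
    exact h c.2

lemma qmap_surj {d : ℕ} (σ : Equiv.Perm (Fin d)) : Function.Surjective (qmap σ) := by
  rintro (c | c)
  · obtain ⟨x, hx⟩ := (Equiv.Perm.mem_cycleFactorsFinset_iff.1 c.2).1.nonempty_support
    exact ⟨x, (qmap_inl _ _ _).2 hx⟩
  · exact ⟨c.1, (qmap_inr _ _ _).2 rfl⟩

lemma qmap_eq {d : ℕ} (σ : Equiv.Perm (Fin d)) (x y : Fin d) :
    qmap σ x = qmap σ y → σ.SameCycle x y := by
  intro h
  by_cases hx : σ x = x
  · have : qmap σ x = Sum.inr ⟨x, hx⟩ := (qmap_inr _ _ _).2 rfl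
    rw [this, eq_comm, qmap_inr] at h
    simp only at h
    rw [h]
  · have : qmap σ x = Sum.inl ⟨σ.cycleOf x, Equiv.Perm.cycleOf_mem_cycleFactorsFinset_iff.2
      (Equiv.Perm.mem_support.2 hx)⟩ := by simp [qmap, hx]
    rw [this, eq_comm, qmap_inl] at h
    exact (Equiv.Perm.mem_support_cycleOf_iff.1 h).1

lemma qmap_apply {d : ℕ} (σ : Equiv.Perm (Fin d)) (x : Fin d) :
    qmap σ (σ x) = qmap σ x := by
  by_cases hx : σ x = x
  · rw [hx]
  · have hx' : σ (σ x) ≠ σ x := fun h => hx (σ.injective h)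
    simp only [qmap, hx, hx', dif_neg, not_false_eq_true]
    congr 2
    exact (Equiv.Perm.SameCycle.cycleOf_eq (Equiv.Perm.sameCycle_apply_right.2
      (Equiv.Perm.SameCycle.refl _ _))).symm

lemma inv_iff {d : ℕ} (σ : Equiv.Perm (Fin d)) (g : Fin d → Fin d) :
    (∀ x y, qmap σ x = qmap σ y → g x = g y) ↔ g ∘ σ = g := by
  constructor
  · intro h
    funext x
    exact h _ _ (qmap_apply σ x)
  · intro h x y hxy
    have h1 : ∀ x, g (σ x) = g x := fun x => congrFun h x
    obtain ⟨i, rfl⟩ := (qmap_eq σ x y hxy).exists_nat_pow_eq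
    clear hxy
    induction i with
    | zero => simp
    | succ k ih => rw [pow_succ', Equiv.Perm.mul_apply, h1]; exact ih

lemma permPowSum_eq {d : ℕ} (σ : Equiv.Perm (Fin d)) :
    permPowSum d σ = ∑ g : Fin d → Fin d with g ∘ σ = g, xg g := by
  classical
  have key := prod_sum_fiber (d := d) (qmap σ) (qmap_surj σ)
  simp only [inv_iff] at key
  rw [← key, Fintype.prod_sum_type]
  unfold permPowSum
  congr 1
  · rw [Equiv.Perm.cycleType_def, Multiset.map_map]
    change ∏ c ∈ σ.cycleFactorsFinset, _ = _
    rw [← Finset.prod_coe_sort]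
    refine Finset.prod_congr rfl fun c _ => ?_
    simp only [qmap_inl, Function.comp]
    rw [Fintype.card_coe]
  · simp only [qmap_inr]
    simp only [Fintype.card_unique, Finset.prod_const, Finset.card_univ]
    congr 1
    rw [Equiv.Perm.sum_cycleType, Fintype.card_subtype]
    have := Finset.card_compl σ.support
    rw [Fintype.card_fin] at this
    rw [← this]
    congr 1
    ext x
    simp

lemma chi_eq {d : ℕ} (lam : ℕ → ℕ) (σ : Equiv.Perm (Fin d)) :
    chi d lam σ = ∑ g : Fin d → Fin d with g ∘ σ = g,
      coeff (staircase d lam) (vandermonde d * xg g) := by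
  unfold chi
  rw [permPowSum_eq, Finset.mul_sum, coeff_sum]

/-! degree and antisymmetry of the Vandermonde product -/

lemma vdm_degree (k : ℕ) : degreeOf 0 (vandermonde (k+1)) ≤ k := by
  classical
  unfold vandermonde
  refine (degreeOf_prod_le _ _ _).trans ?_
  calc _ ≤ ∑ p : Fin (k+1) × Fin (k+1) with p.1 < p.2, (if p.1 = 0 then 1 else 0) := by
        refine Finset.sum_le_sum fun p hp => ?_
        simp only [Finset.mem_filter, Finset.mem_univ, true_and] at hp
        refine (degreeOf_sub_le _ _ _).trans ?_
        have h2 : p.2 ≠ 0 := fun h => by rw [h] at hp; exact absurd hp (Fin.not_lt_zero _)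
        rw [degreeOf_X, degreeOf_X]
        simp [h2.symm, eq_comm]
    _ = k := by
        rw [← Finset.card_filter, Finset.filter_filter]
        have : (Finset.univ.filter (fun p : Fin (k+1) × Fin (k+1) => p.1 < p.2 ∧ p.1 = 0)) =
          Finset.univ.image (fun j : Fin k => ((0 : Fin (k+1)), j.succ)) := by
          ext ⟨a, b⟩
          simp only [Finset.mem_filter, Finset.mem_univ, true_and, Finset.mem_image, Prod.mk.injEq]
          constructor
          · rintro ⟨h, rfl⟩
            obtain ⟨j, rfl⟩ := Fin.exists_succ_eq.2 h.ne'
            exact ⟨j, rfl, rfl⟩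
          · rintro ⟨j, rfl, rfl⟩
            exact ⟨Fin.succ_pos _, rfl⟩
        rw [this, Finset.card_image_of_injective]
        · simp
        · intro a b h
          simpa using h

lemma vdm_det (d : ℕ) :
    vandermonde d = (Matrix.vandermonde (fun i : Fin d => -(X i : MvPolynomial (Fin d) ℤ))).det := by
  rw [Matrix.det_vandermonde, Finset.prod_sigma']
  unfold vandermonde
  refine Finset.prod_bij' (fun p _ => ⟨p.1, p.2⟩) (fun p _ => (p.1, p.2)) ?_ ?_ ?_ ?_ ?_
  · simp
  · simp
  · simp
  · simp
  · intros; ring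

lemma vdm_rename {d : ℕ} (τ : Equiv.Perm (Fin d)) :
    rename τ (vandermonde d) = ((Equiv.Perm.sign τ : ℤ) : MvPolynomial (Fin d) ℤ) * vandermonde d := by
  rw [vdm_det, ← Matrix.det_permute, AlgHom.map_det]
  congr 1
  ext1 i j
  simp [Matrix.vandermonde]

lemma weight_ne_zero {k : ℕ} (lam : ℕ → ℕ) (g : Fin (k+1) → Fin (k+1))
    (h : coeff (staircase (k+1) lam) (vandermonde (k+1) * xg g) ≠ 0) :
    lam 0 ≤ Fintype.card {j // g j = 0} := by
  rw [xg_eq, coeff_mul_monomial'] at h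
  split_ifs at h with h1
  · rw [mul_one] at h
    have h2 := degreeOf_le_iff.1 (vdm_degree k) _ (mem_support_iff.2 h)
    rw [Finsupp.tsub_apply, cnt_apply] at h2
    simp [staircase] at h2
    simp at *
    omega
  · exact absurd rfl h


lemma cancel {k K : ℕ} (e : Fin (k+1) →₀ ℕ) (he : ∀ i : Fin k, e i.succ ≤ e i.castSucc)
    (G Hp : MvPolynomial (Fin (k+1)) ℤ)
    (hG : ∀ i : Fin k, rename (Equiv.swap i.castSucc i.succ) G = -G) (C : ℤ)
    (hH : ∀ b, coeff b Hp = if ∑ i, b i = K then C else 0) (hK : e 0 < K + k) :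
    coeff e (Hp * G) = 0 := by
  classical
  have anti : ∀ (i : Fin k) (c : Fin (k+1) →₀ ℕ),
      coeff (c.mapDomain (Equiv.swap i.castSucc i.succ)) G = - coeff c G := by
    intro i c
    have h := coeff_rename_mapDomain (Equiv.swap i.castSucc i.succ)
      (Equiv.swap i.castSucc i.succ).injective G c
    rw [hG, coeff_neg] at h
    linarith
  have hmin : ∀ c : Fin (k+1) →₀ ℕ, (∃ i : Fin k, c i.castSucc ≤ e i.succ) →
      ∃ i : Fin k, c i.castSucc ≤ e i.succ ∧ ∀ j < i, ¬ (c j.castSucc ≤ e j.succ) := by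
    intro c hc
    obtain ⟨i, hi, hi'⟩ := WellFounded.has_min (wellFounded_lt (α := Fin k))
      {i : Fin k | c i.castSucc ≤ e i.succ} hc
    exact ⟨i, hi, fun j hj hj' => hi' j hj' hj⟩
  choose ix hix1 hix2 using hmin
  rw [coeff_mul]
  simp only [hH, ite_mul, zero_mul]
  rw [← Finset.sum_filter]
  set s := (Finset.HasAntidiagonal.antidiagonal e).filter (fun p => ∑ i, p.1 i = K) with hs
  have hex : ∀ p ∈ s, ∃ i : Fin k, p.2 i.castSucc ≤ e i.succ := by
    rintro ⟨b, c⟩ hp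
    rw [hs, Finset.mem_filter, Finset.HasAntidiagonal.mem_antidiagonal] at hp
    obtain ⟨h1, h2⟩ := hp
    simp only at h1 h2 ⊢
    by_contra! hcon
    have h3 : ∑ i, e i = ∑ i, b i + ∑ i, c i := by
      rw [← h1, ← Finset.sum_add_distrib]; simp only [Finsupp.add_apply]
    rw [Fin.sum_univ_succ (fun i => e i), Fin.sum_univ_castSucc (fun i => c i), h2] at h3
    have h4 : ∑ i : Fin k, (e i.succ + 1) ≤ ∑ i : Fin k, c i.castSucc :=
      Finset.sum_le_sum fun i _ => hcon i
    rw [Finset.sum_add_distrib] at h4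
    simp at h4
    omega
  have swp : ∀ (i : Fin k) (c : Fin (k+1) →₀ ℕ) (x : Fin (k+1)),
      c.mapDomain (Equiv.swap i.castSucc i.succ) x = c (Equiv.swap i.castSucc i.succ x) := by
    intro i c x
    rw [Finsupp.mapDomain_equiv_apply, Equiv.symm_swap]
  have sle : ∀ (i : Fin k) (c : Fin (k+1) →₀ ℕ), c ≤ e → c i.castSucc ≤ e i.succ →
      c.mapDomain (Equiv.swap i.castSucc i.succ) ≤ e := by
    intro i c hc hi x
    rw [swp]
    by_cases h1 : x = i.castSucc
    · subst h1
      rw [Equiv.swap_apply_left]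
      exact (hc _).trans (he i)
    by_cases h2 : x = i.succ
    · subst h2
      rw [Equiv.swap_apply_right]
      exact hi
    rw [Equiv.swap_apply_of_ne_of_ne h1 h2]
    exact hc x
  have ssum : ∀ (i : Fin k) (c : Fin (k+1) →₀ ℕ),
      ∑ x, c.mapDomain (Equiv.swap i.castSucc i.succ) x = ∑ x, c x := by
    intro i c
    simp only [swp]
    exact Equiv.sum_comp (Equiv.swap i.castSucc i.succ) c
  have hle : ∀ p ∈ s, p.2 ≤ e := by
    rintro ⟨b, c⟩ hp
    rw [hs, Finset.mem_filter, Finset.HasAntidiagonal.mem_antidiagonal] at hp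
    rw [← hp.1]
    exact le_add_self
  refine Finset.sum_involution (fun p hp =>
    (e - p.2.mapDomain (Equiv.swap (ix p.2 (hex p hp)).castSucc (ix p.2 (hex p hp)).succ),
      p.2.mapDomain (Equiv.swap (ix p.2 (hex p hp)).castSucc (ix p.2 (hex p hp)).succ))) ?_ ?_ ?_ ?_
  · intro p hp
    simp only
    rw [anti]
    ring
  · intro p hp hne heq
    have h1 := congrArg Prod.snd heq
    simp only at h1
    have h2 := anti (ix p.2 (hex p hp)) p.2
    rw [h1] at h2
    apply hne
    have : coeff p.2 G = 0 := by linarith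
    rw [this, mul_zero]
  · intro p hp
    have hp' := hp
    rw [hs, Finset.mem_filter, Finset.HasAntidiagonal.mem_antidiagonal] at hp' ⊢
    have hl := sle _ _ (hle p hp) (hix1 p.2 (hex p hp))
    refine ⟨tsub_add_cancel_of_le hl, ?_⟩
    simp only
    have h3 : ∑ i, e i = ∑ i, p.1 i + ∑ i, p.2 i := by
      rw [← hp'.1, ← Finset.sum_add_distrib]; simp only [Finsupp.add_apply]
    set c' := p.2.mapDomain (Equiv.swap (ix p.2 (hex p hp)).castSucc (ix p.2 (hex p hp)).succ) with hc'
    have h4 : ∑ i, e i = ∑ i, (e - c') i + ∑ i, c' i := by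
      rw [← Finset.sum_add_distrib]
      refine Finset.sum_congr rfl fun i _ => ?_
      have := hl i
      rw [Finsupp.tsub_apply]
      omega
    rw [hc', ssum, ← hc'] at h4
    rw [hp'.2] at h3
    omega
  · rintro p hp
    have hp' := hp
    rw [hs, Finset.mem_filter, Finset.HasAntidiagonal.mem_antidiagonal] at hp'
    set i := ix p.2 (hex p hp) with hi
    set c' := p.2.mapDomain (Equiv.swap i.castSucc i.succ) with hc'
    have hP : c' i.castSucc ≤ e i.succ := by
      rw [hc', swp, Equiv.swap_apply_left]
      exact hle p hp _
    have hP' : ∀ j < i, ¬ (c' j.castSucc ≤ e j.succ) := by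
      intro j hj
      rw [hc', swp, Equiv.swap_apply_of_ne_of_ne]
      · exact hix2 _ _ _ hj
      · intro h; exact hj.ne (Fin.castSucc_injective _ h)
      · intro h
        have := congrArg Fin.val h
        have hj' : j.val < i.val := hj
        simp at this
        omega
    have hii : ∀ h, ix c' h = i := by
      intro h
      rcases lt_trichotomy (ix c' h) i with h1 | h1 | h1
      · exact absurd (hix1 c' h) (hP' _ h1)
      · exact h1
      · exact absurd hP (hix2 c' h _ h1)
    have hcc : c'.mapDomain (Equiv.swap i.castSucc i.succ) = p.2 := by
      ext x
      rw [swp, hc', swp, Equiv.swap_apply_self]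
    have hfin : ∀ h, (e - c'.mapDomain (Equiv.swap (ix c' h).castSucc (ix c' h).succ),
        c'.mapDomain (Equiv.swap (ix c' h).castSucc (ix c' h).succ)) = p := by
     intro h
     rw [hii, hcc]
     ext1
     · simp only
       rw [← hp'.1, add_tsub_cancel_right]
     · rfl
    exact hfin _

def st {ι κ : Type} [Fintype ι] [Fintype κ] [DecidableEq κ] (h : ι → κ) : ℕ :=
  ∏ k, (Fintype.card {a // h a = k}).factorial

lemma st_eq {ι κ : Type} [Fintype ι] [DecidableEq ι] [Fintype κ] [DecidableEq κ] (h : ι → κ) :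
    st h = Fintype.card {g : Equiv.Perm ι // h ∘ g = h} := (DomMulAct.stabilizer_card h).symm

lemma st_congr {ι κ κ' : Type} [Fintype ι] [DecidableEq ι] [Fintype κ] [DecidableEq κ]
    [Fintype κ'] [DecidableEq κ'] (h : ι → κ) (h' : ι → κ') (H : ∀ x y, h x = h y ↔ h' x = h' y) :
    st h = st h' := by
  rw [st_eq, st_eq]
  refine Fintype.card_congr (Equiv.subtypeEquivRight fun g => ?_)
  simp only [funext_iff, Function.comp, H]

lemma st_split {ι κ : Type} [Fintype ι] [Fintype κ] [DecidableEq κ] (h : ι → κ)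
    (A : ι → Prop) [DecidablePred A] (hA : ∀ x y, A x → ¬ A y → h x ≠ h y) :
    st h = st (fun a : {x // A x} => h a) * st (fun a : {x // ¬ A x} => h a) := by
  classical
  unfold st
  rw [← Finset.prod_mul_distrib]
  refine Finset.prod_congr rfl fun k _ => ?_
  have h1 : Fintype.card {a // h a = k} =
      Fintype.card {a : {x // A x} // h a = k} + Fintype.card {a : {x // ¬ A x} // h a = k} := by
    rw [Fintype.card_congr (Equiv.subtypeSubtypeEquivSubtypeInter A (fun a => h a = k)),
      Fintype.card_congr (Equiv.subtypeSubtypeEquivSubtypeInter (fun a => ¬ A a) (fun a => h a = k))]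
    simp only [Fintype.card_subtype]
    rw [← Finset.card_filter_add_card_filter_not (s := Finset.univ.filter (fun a => h a = k)) A]
    rw [Finset.filter_filter, Finset.filter_filter]
    simp only [and_comm]
  by_cases hk : ∃ x, A x ∧ h x = k
  · obtain ⟨x, hx, rfl⟩ := hk
    have h2 : Fintype.card {a : {x // ¬ A x} // h a = h x} = 0 := by
      rw [Fintype.card_eq_zero_iff]
      exact ⟨fun a => hA x a.1.1 hx a.1.2 a.2.symm⟩
    rw [h1, h2]; simp
  · have h2 : Fintype.card {a : {x // A x} // h a = k} = 0 := by
      rw [Fintype.card_eq_zero_iff]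
      exact ⟨fun a => hk ⟨a.1.1, a.1.2, a.2⟩⟩
    rw [h1, h2]; simp

noncomputable def hpoly (d : ℕ) (ι : Type) [Fintype ι] [DecidableEq ι] : MvPolynomial (Fin d) ℤ :=
  ∑ g : ι → Fin d, (st g : MvPolynomial (Fin d) ℤ) * xg g

lemma card_cnt {d : ℕ} {ι : Type} [Fintype ι] [DecidableEq ι] (b : Fin d →₀ ℕ) :
    ∑ g : ι → Fin d, (if cnt g = b then (1 : ℤ) else 0) =
      if ∑ i, b i = Fintype.card ι then (Nat.multinomial Finset.univ b : ℤ) else 0 := by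
  classical
  have h1 : ∑ g : ι → Fin d, xg g = (∑ i : Fin d, (X i : MvPolynomial (Fin d) ℤ)) ^ Fintype.card ι := by
    unfold xg
    rw [← Finset.card_univ, ← Finset.prod_const, Finset.prod_univ_sum]
    simp
  have h2 := congrArg (coeff b) h1
  rw [coeff_sum, Finset.sum_pow_eq_sum_piAntidiag, coeff_sum] at h2
  simp only [xg_eq, coeff_monomial] at h2
  rw [h2]
  have h3 : ∀ c : Fin d → ℕ, coeff b ((Nat.multinomial Finset.univ c : MvPolynomial (Fin d) ℤ) *
      ∏ i, X i ^ c i) = if c = b then (Nat.multinomial Finset.univ b : ℤ) else 0 := by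
    intro c
    have : (∏ i, (X i : MvPolynomial (Fin d) ℤ) ^ c i) =
        monomial (Finsupp.equivFunOnFinite.symm c) 1 := by
      rw [monomial_eq, Finsupp.prod_fintype] <;> simp
    rw [this, ← map_natCast (C : ℤ →+* MvPolynomial (Fin d) ℤ), coeff_C_mul, coeff_monomial]
    by_cases hc : c = b
    · subst hc
      have : Finsupp.equivFunOnFinite.symm (b : Fin d → ℕ) = b := by ext; simp
      simp [this]
    · rw [if_neg hc, if_neg, mul_zero]
      rintro rfl
      exact hc (by ext; simp)
  simp only [h3]
  rw [Finset.sum_ite_eq']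
  simp [Finset.mem_piAntidiag]

lemma coeff_hpoly {d : ℕ} {ι : Type} [Fintype ι] [DecidableEq ι] (b : Fin d →₀ ℕ) :
    coeff b (hpoly d ι) = if ∑ i, b i = Fintype.card ι then ((Fintype.card ι).factorial : ℤ) else 0 := by
  classical
  unfold hpoly
  rw [coeff_sum]
  have h1 : ∀ g : ι → Fin d, coeff b ((st g : MvPolynomial (Fin d) ℤ) * xg g) =
      (∏ i, (b i).factorial : ℕ) * (if cnt g = b then (1 : ℤ) else 0) := by
    intro g
    rw [← map_natCast (C : ℤ →+* MvPolynomial (Fin d) ℤ), coeff_C_mul, xg_eq, coeff_monomial]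
    split_ifs with h
    · subst h
      simp only [cnt_apply, st]
    · simp
  simp only [h1]
  rw [← Finset.mul_sum, card_cnt]
  split_ifs with h
  · rw [← h, ← Nat.multinomial_spec Finset.univ b]
    push_cast
    rfl
  · simp

lemma sum_chi {k : ℕ} {P : Type} [Fintype P] [DecidableEq P] (nu : ℕ → ℕ)
    (hnu : ∀ i, nu (i+1) ≤ nu i) (F : Fin (k+1) → P) (p₀ : P)
    (hF : nu 0 < Fintype.card {x // F x = p₀}) :
    ∑ σ ∈ Finset.univ.filter (fun σ : Equiv.Perm (Fin (k+1)) => F ∘ σ = F), chi (k+1) nu σ = 0 := by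
  classical
  set N : (Fin (k+1) → Fin (k+1)) → ℕ := fun g => st (fun x => (F x, g x)) with hN
  set Q : MvPolynomial (Fin (k+1)) ℤ := ∑ g : {x // ¬ F x = p₀} → Fin (k+1),
    (st (fun x => (F x.1, g x)) : MvPolynomial (Fin (k+1)) ℤ) * xg g with hQ
  have hprod : ∑ g, (N g : MvPolynomial (Fin (k+1)) ℤ) * xg g =
      hpoly (k+1) {x // F x = p₀} * Q := by
    rw [← Equiv.sum_comp (Equiv.piEquivPiSubtypeProd (fun x => F x = p₀) (fun _ => Fin (k+1))).symm,
      Fintype.sum_prod_type, hpoly, hQ, Finset.sum_mul_sum]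
    refine Finset.sum_congr rfl fun gA _ => Finset.sum_congr rfl fun gB _ => ?_
    set g := (Equiv.piEquivPiSubtypeProd (fun x => F x = p₀) (fun _ => Fin (k+1))).symm (gA, gB) with hg
    have hgA : ∀ x : {x // F x = p₀}, g x = gA x := by
      intro x; simp [hg, Equiv.piEquivPiSubtypeProd, x.2]
    have hgB : ∀ x : {x // ¬ F x = p₀}, g x = gB x := by
      intro x; simp [hg, Equiv.piEquivPiSubtypeProd, x.2]
    have h1 : xg g = xg gA * xg gB := by
      unfold xg
      rw [← Fintype.prod_subtype_mul_prod_subtype (fun x => F x = p₀)]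
      simp only [hgA, hgB]
    have h2 : N g = st gA * st (fun x : {x // ¬ F x = p₀} => (F x.1, gB x)) := by
      rw [hN]
      simp only
      rw [st_split _ (fun x => F x = p₀)]
      · simp only [hgB]
        congr 1
        apply st_congr
        intro x y
        simp [hgA, x.2, y.2]
      · intro x y hx hy hxy
        simp only [Prod.mk.injEq] at hxy
        exact hy (hxy.1 ▸ hx)
    rw [h1, h2]
    push_cast
    ring
  have hsymm : ∀ τ : Equiv.Perm (Fin (k+1)), rename τ Q = Q := by
    intro τ
    rw [hQ, map_sum]
    conv_rhs => rw [← Equiv.sum_comp (Equiv.arrowCongr (Equiv.refl _) τ)]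
    refine Finset.sum_congr rfl fun g _ => ?_
    rw [map_mul, map_natCast]
    congr 1
    · congr 1
      apply st_congr
      intro x y
      simp [Equiv.arrowCongr]
    · simp [xg, Equiv.arrowCongr]
  have hchi : ∑ σ ∈ Finset.univ.filter (fun σ : Equiv.Perm (Fin (k+1)) => F ∘ σ = F), chi (k+1) nu σ =
      coeff (staircase (k+1) nu) (hpoly (k+1) {x // F x = p₀} * (vandermonde (k+1) * Q)) := by
    rw [mul_left_comm, ← hprod, Finset.mul_sum, coeff_sum]
    simp only [chi_eq, Finset.sum_filter]
    simp only [← Finset.sum_filter (fun σ : Equiv.Perm (Fin (k+1)) => F ∘ σ = F)]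
    rw [Finset.sum_comm]
    refine Finset.sum_congr rfl fun g _ => ?_
    rw [mul_left_comm, ← map_natCast (C : ℤ →+* MvPolynomial (Fin (k+1)) ℤ), coeff_C_mul,
      ← Finset.sum_filter, Finset.filter_filter, Finset.sum_const, nsmul_eq_mul]
    congr 2
    rw [hN]
    simp only
    rw [st_eq, Fintype.card_subtype]
    congr 1
    ext σ
    simp only [Finset.mem_filter, Finset.mem_univ, true_and, funext_iff, Function.comp,
      Prod.mk.injEq, forall_and]
  rw [hchi]
  refine cancel (K := Fintype.card {x // F x = p₀}) _ ?_ _ _ ?_ _ coeff_hpoly ?_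
  · intro i
    have := hnu i
    simp [staircase]
    omega
  · intro i
    rw [map_mul, hsymm, vdm_rename, Equiv.Perm.sign_swap (Fin.castSucc_lt_succ).ne]
    simp
  · simp [staircase]
    omega

lemma sum_zero {k L M : ℕ} (lam mu nu : ℕ → ℕ) (hnu : ∀ i, nu (i+1) ≤ nu i)
    (hl : k + 1 ≤ lam 0 + L) (hm : k + 1 ≤ mu 0 + M) (hn : nu 0 + L + M < k + 1) :
    ∑ σ : Equiv.Perm (Fin (k+1)), chi (k+1) lam σ * chi (k+1) mu σ * chi (k+1) nu σ = 0 := by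
  classical
  set e : (ℕ → ℕ) → (Fin (k+1) → Fin (k+1)) → ℤ := fun lam g =>
    coeff (staircase (k+1) lam) (vandermonde (k+1) * xg g) with he
  have h1 : ∀ σ : Equiv.Perm (Fin (k+1)), chi (k+1) lam σ * chi (k+1) mu σ * chi (k+1) nu σ =
      ∑ f : (Fin (k+1) → Fin (k+1)), ∑ g : (Fin (k+1) → Fin (k+1)),
        if f ∘ σ = f ∧ g ∘ σ = g then e lam f * e mu g * chi (k+1) nu σ else 0 := by
    intro σ
    rw [chi_eq lam, chi_eq mu, Finset.sum_filter, Finset.sum_filter, Finset.sum_mul_sum,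
      Finset.sum_mul]
    refine Finset.sum_congr rfl fun f _ => ?_
    rw [Finset.sum_mul]
    refine Finset.sum_congr rfl fun g _ => ?_
    by_cases hf : f ∘ σ = f <;> by_cases hg : g ∘ σ = g <;> simp [hf, hg, he]
  simp only [h1]
  rw [Finset.sum_comm]
  refine Finset.sum_eq_zero fun f _ => ?_
  rw [Finset.sum_comm]
  refine Finset.sum_eq_zero fun g _ => ?_
  rw [← Finset.sum_filter, ← Finset.mul_sum]
  by_cases hf : e lam f = 0
  · simp [hf]
  by_cases hg : e mu g = 0
  · simp [hg]
  have hf' := weight_ne_zero lam f hf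
  have hg' := weight_ne_zero mu g hg
  have hcard : nu 0 < Fintype.card {x // (f x, g x) = ((0 : Fin (k+1)), (0 : Fin (k+1)))} := by
    rw [Fintype.card_subtype] at hf' hg' ⊢
    have h2 := Finset.card_union_add_card_inter (Finset.univ.filter (fun x => f x = 0))
      (Finset.univ.filter (fun x => g x = 0))
    have h3 := Finset.card_le_univ (Finset.univ.filter (fun x => f x = 0) ∪
      (Finset.univ.filter (fun x => g x = 0)))
    rw [← Finset.filter_and] at h2
    simp only [Prod.mk.injEq]
    simp only [Fintype.card_fin] at h3
    omega
  have := sum_chi nu hnu (fun x => (f x, g x)) _ hcard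
  have h4 : (Finset.univ.filter (fun σ : Equiv.Perm (Fin (k+1)) => f ∘ σ = f ∧ g ∘ σ = g)) =
      Finset.univ.filter (fun σ : Equiv.Perm (Fin (k+1)) =>
        (fun x => (f x, g x)) ∘ σ = (fun x => (f x, g x))) := by
    ext σ
    simp only [Finset.mem_filter, Finset.mem_univ, true_and, funext_iff, Function.comp,
      Prod.mk.injEq, forall_and]
  rw [h4, this, mul_zero]

lemma le_psize (n : ℕ →₀ ℕ) : n 0 ≤ psize n := by
  unfold psize
  by_cases h : 0 ∈ n.support
  · exact Finset.single_le_sum (f := fun i => n i) (fun _ _ => Nat.zero_le _) h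
  · rw [Finsupp.notMem_support_iff] at h
    omega

lemma pad_anti (n : ℕ →₀ ℕ) (hn : IsPtn n) (d : ℕ) (hd : 2 * psize n ≤ d) (i : ℕ) :
    pad n d (i+1) ≤ pad n d i := by
  have := le_psize n
  unfold pad
  rcases i with _ | i
  · simp
    omega
  · simpa using hn i (i+1) (Nat.le_succ i)

lemma main (l m n : ℕ →₀ ℕ) (hn : IsPtn n) (h : psize l + psize m < psize n) (d : ℕ)
    (hd : 2 * psize n ≤ d) :
    ∑ σ : Equiv.Perm (Fin d), chi d (pad l d) σ * chi d (pad m d) σ * chi d (pad n d) σ = 0 := by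
  obtain ⟨k, rfl⟩ : ∃ k, d = k + 1 := ⟨d - 1, by omega⟩
  refine sum_zero (L := psize l) (M := psize m) _ _ _ (pad_anti n hn _ hd) ?_ ?_ ?_ <;>
    simp only [pad, if_true] <;> omega

end RKT

/-- Murnaghan–Littlewood inequalities: if any of `|ν| ≤ |λ|+|μ|`, `|μ| ≤ |λ|+|ν|`,
`|λ| ≤ |μ|+|ν|` fails, then `g_{λ[d],μ[d]}^{ν[d]} = 0` for all sufficiently large `d`,
i.e. the reduced Kronecker coefficient `ḡ_{λμ}^ν` vanishes. -/
theorem reduced_kron_triangle (l m n : ℕ →₀ ℕ) (hl : IsPtn l) (hm : IsPtn m)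
    (hn : IsPtn n)
    (h : ¬ (psize n ≤ psize l + psize m ∧ psize m ≤ psize l + psize n ∧
      psize l ≤ psize m + psize n)) :
    ∃ D : ℕ, ∀ d : ℕ, D ≤ d → gKron d (pad l d) (pad m d) (pad n d) = 0 := by
  refine ⟨2 * psize l + 2 * psize m + 2 * psize n, fun d hd => ?_⟩
  have key : ∑ σ : Equiv.Perm (Fin d),
      chi d (pad l d) σ * chi d (pad m d) σ * chi d (pad n d) σ = 0 := by
    by_cases h1 : psize n ≤ psize l + psize m
    · by_cases h2 : psize m ≤ psize l + psize n
      · have h3 : psize m + psize n < psize l := by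
          by_contra h4
          exact h ⟨h1, h2, by omega⟩
        rw [← RKT.main m n l hl h3 d (by omega)]
        exact Finset.sum_congr rfl fun σ _ => by ring
      · rw [← RKT.main l n m hm (by omega) d (by omega)]
        exact Finset.sum_congr rfl fun σ _ => by ring
    · exact RKT.main l m n hn (by omega) d (by omega)
  unfold gKron
  rw [key, Int.zero_ediv]
end

section
/- For partitions λ, μ of sizes m and n with |ν| = m + n, and for all d large enough, the Kronecker coefficient g_{λ[d],μ[d]}^{ν[d]} equals the Littlewood–Richardson coefficient c_{λμ}^ν (Murnaghan–Littlewood theorem in stable form): ḡ_{λμ}^ν = c_{λμ}^ν whenever |ν| = |λ| + |μ|. -/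
open MvPolynomial

/-- The complete homogeneous symmetric polynomial `h_r` in `n` variables. -/
noncomputable def hsym (n r : ℕ) : MvPolynomial (Fin n) ℤ :=
  ∑ e ∈ Finset.finsuppAntidiag (Finset.univ : Finset (Fin n)) r, monomial e 1

/-- `h_z` for an integer index, with `h_z = 0` for `z < 0`. -/
noncomputable def hsymInt (n : ℕ) (z : ℤ) : MvPolynomial (Fin n) ℤ :=
  if z < 0 then 0 else hsym n z.toNat

/-- The Schur polynomial `s_λ` in `n` variables, via the Jacobi–Trudi determinant
`s_λ = det (h_{λ_i - i + j})`. -/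
noncomputable def schur (n : ℕ) (lam : ℕ → ℕ) : MvPolynomial (Fin n) ℤ :=
  Matrix.det (Matrix.of fun i j : Fin n => hsymInt n ((lam i.val : ℤ) - (i.val : ℤ) + (j.val : ℤ)))

/-- The Littlewood–Richardson coefficient `c_{κλ}^ν`, the multiplicity of `s_ν` in
`s_κ s_λ`: since `a_δ · s_κ s_λ = ∑_ν c_{κλ}^ν a_{ν+δ}`, it is the coefficient of
`x^{ν+δ}` in `a_δ · s_κ · s_λ`. -/
noncomputable def lrCoeff (n : ℕ) (kappa lam nu : ℕ → ℕ) : ℤ :=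
  coeff (staircase n nu) (vandermonde n * schur n kappa * schur n lam)


namespace ML

open Equiv.Perm in
theorem cyc_expand {α ι R : Type*} [Fintype α] [DecidableEq α] [Fintype ι] [DecidableEq ι]
    [CommRing R] (σ : Equiv.Perm α) (Y : ι → R) :
    (σ.cycleType.map (fun r => ∑ o, Y o ^ r)).prod *
      (∑ o, Y o ^ 1) ^ (Fintype.card α - σ.cycleType.sum) =
    ∑ f : α → ι with (f ∘ σ = f), ∏ a, Y (f a) := by
  classical
  let K := {c // c ∈ σ.cycleFactorsFinset} ⊕ {a // σ a = a}
  let cl : α → K := fun a => if h : σ a = a then Sum.inr ⟨a, h⟩ else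
    Sum.inl ⟨σ.cycleOf a, cycleOf_mem_cycleFactorsFinset_iff.2 (mem_support.2 h)⟩
  have cl_fix : ∀ a (h : σ a = a), cl a = Sum.inr ⟨a, h⟩ := fun a h => dif_pos h
  have cl_mov : ∀ a (h : ¬ σ a = a), cl a = Sum.inl ⟨σ.cycleOf a, cycleOf_mem_cycleFactorsFinset_iff.2 (mem_support.2 h)⟩ := fun a h => dif_neg h
  have cl_inl : ∀ a (c : {c // c ∈ σ.cycleFactorsFinset}), cl a = Sum.inl c ↔ a ∈ c.1.support := by
    intro a c
    by_cases h : σ a = a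
    · rw [cl_fix a h]
      simp only [reduceCtorEq, false_iff]
      intro hc
      exact (mem_support.1 (mem_cycleFactorsFinset_support_le c.2 hc)) h
    · rw [cl_mov a h]
      constructor
      · intro hc
        rw [← Sum.inl.inj hc]
        simpa [mem_support_cycleOf_iff] using h
      · intro hc
        congr 1
        apply Subtype.ext
        exact (cycle_is_cycleOf hc c.2).symm
  have cl_inr : ∀ a (c : {a // σ a = a}), cl a = Sum.inr c ↔ a = c.1 := by
    intro a c
    by_cases h : σ a = a
    · rw [cl_fix a h]
      exact ⟨fun hc => congrArg Subtype.val (Sum.inr.inj hc), fun hc => congrArg Sum.inr (Subtype.ext hc)⟩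
    · rw [cl_mov a h]
      simp only [reduceCtorEq, false_iff]
      rintro rfl
      exact h c.2
  have cl_surj : Function.Surjective cl := by
    rintro (c | c)
    · have : c.1.support.Nonempty := by
        have := (mem_cycleFactorsFinset_iff.1 c.2).1
        exact Finset.nonempty_iff_ne_empty.2 (by simpa using this.ne_one)
      obtain ⟨a, ha⟩ := this
      exact ⟨a, (cl_inl a c).2 ha⟩
    · exact ⟨c.1, (cl_inr _ c).2 rfl⟩
  have cl_inv : ∀ a, cl (σ a) = cl a := by
    intro a
    by_cases h : σ a = a
    · rw [h]
    · rw [cl_mov a h, cl_inl, mem_support_cycleOf_iff]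
      exact ⟨⟨1, by simp⟩, by simpa using h⟩
  have cl_same : ∀ a b, cl a = cl b → σ.SameCycle a b := by
    intro a b hab
    by_cases h : σ a = a
    · rw [cl_fix a h] at hab
      have := (cl_inr b _).1 hab.symm
      subst this
      exact SameCycle.refl _ _
    · rw [cl_mov a h] at hab
      have := (cl_inl b _).1 hab.symm
      exact (mem_support_cycleOf_iff.1 this).1
  have key : ∑ f : α → ι with (f ∘ σ = f), ∏ a, Y (f a) = ∑ g : K → ι, ∏ a, Y (g (cl a)) := by
    symm
    refine Finset.sum_of_injOn (fun g => g ∘ cl) ?_ ?_ ?_ ?_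
    · intro g _ g' _ h
      exact cl_surj.injective_comp_right h
    · intro g _
      simp only [Finset.coe_filter, Finset.mem_univ, true_and, Set.mem_ofPred_eq]
      funext a
      simp [cl_inv]
    · intro f hf hn
      exfalso
      apply hn
      simp only [Finset.mem_filter, Finset.mem_univ, true_and] at hf
      have hz : ∀ (a b), σ.SameCycle a b → f a = f b := by
        rintro a b ⟨k, rfl⟩
        have h1 : ∀ x, f (σ x) = f x := fun x => congrFun hf x
        have h2 : ∀ x, f (σ⁻¹ x) = f x := fun x => by rw [← h1]; simp
        have h3 : ∀ (n : ℕ) x, f ((σ ^ n) x) = f x := by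
          intro n
          induction n with
          | zero => simp
          | succ n ih => intro x; rw [pow_succ, mul_apply, ih, h1]
        have h4 : ∀ (n : ℕ) x, f ((σ⁻¹ ^ n) x) = f x := by
          intro n
          induction n with
          | zero => simp
          | succ n ih => intro x; rw [pow_succ, mul_apply, ih, h2]
        cases k with
        | ofNat n => exact (h3 n a).symm
        | negSucc n =>
          rw [zpow_negSucc, ← inv_pow]
          exact (h4 _ a).symm
      refine ⟨fun k => f (cl_surj k).choose, by simp, ?_⟩
      funext a
      exact hz _ _ (cl_same _ _ (cl_surj (cl a)).choose_spec)
    · intro g _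
      rfl
  rw [key]
  have fib : ∀ g : K → ι, ∏ a, Y (g (cl a)) = ∏ k : K, Y (g k) ^ (Finset.univ.filter (fun a => cl a = k)).card := by
    intro g
    rw [← Finset.prod_fiberwise Finset.univ cl]
    refine Finset.prod_congr rfl fun k _ => ?_
    rw [← Finset.prod_const]
    refine Finset.prod_congr rfl fun a ha => ?_
    rw [(Finset.mem_filter.1 ha).2]
  simp_rw [fib]
  have := Finset.prod_univ_sum (fun _ : K => (Finset.univ : Finset ι)) (fun k o => Y o ^ (Finset.univ.filter (fun a => cl a = k)).card)
  rw [Fintype.piFinset_univ] at this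
  rw [← this, Fintype.prod_sum_type]
  congr 1
  · rw [cycleType_def, Multiset.map_map]
    rw [Finset.prod_congr rfl (g := fun c : {c // c ∈ σ.cycleFactorsFinset} =>
      (fun c : Equiv.Perm α => ∑ o, Y o ^ c.support.card) c.1)]
    · rw [Finset.prod_coe_sort σ.cycleFactorsFinset (fun c : Equiv.Perm α => ∑ o, Y o ^ c.support.card)]
      rfl
    · intro c _
      have hs : Finset.univ.filter (fun a => cl a = Sum.inl c) = c.1.support := by
        ext a
        rw [Finset.mem_filter, cl_inl]
        simp only [Finset.mem_univ, true_and]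
      rw [hs]
  · rw [Finset.prod_congr rfl (g := fun _ => ∑ o, Y o ^ 1)]
    · rw [Finset.prod_const, sum_cycleType, Finset.card_univ]
      congr 1
      rw [Fintype.card_subtype, ← Finset.card_compl]
      congr 1
      ext a
      simp
    · intro c _
      have hs : Finset.univ.filter (fun a => cl a = Sum.inr c) = {c.1} := by
        ext a
        rw [Finset.mem_filter, cl_inr]
        simp only [Finset.mem_univ, true_and, Finset.mem_singleton]
      rw [hs, Finset.card_singleton]

theorem burnside {ι : Type*} [Fintype ι] [DecidableEq ι] (d : ℕ) (Ψ : (ι → ℕ) → ℤ) :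
    ∑ σ : Equiv.Perm (Fin d), ∑ f : Fin d → ι with (f ∘ σ = f),
      Ψ (fun i => (Finset.univ.filter (fun a => f a = i)).card) =
    d.factorial * ∑ e ∈ Finset.piAntidiag (Finset.univ : Finset ι) d, Ψ e := by
  classical
  set cont : (Fin d → ι) → (ι → ℕ) := fun f i => (Finset.univ.filter (fun a => f a = i)).card with hcont
  have cont_mem : ∀ f, cont f ∈ Finset.piAntidiag (Finset.univ : Finset ι) d := by
    intro f
    simp only [Finset.mem_piAntidiag, Finset.mem_univ, implies_true, and_true, hcont]
    rw [← Finset.card_eq_sum_card_fiberwise (fun _ _ => Finset.mem_coe.2 (Finset.mem_univ _))]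
    simp
  have h1 : ∀ f : Fin d → ι, (Finset.univ.filter (fun σ : Equiv.Perm (Fin d) => f ∘ σ = f)).card = ∏ i, (cont f i).factorial := by
    intro f
    have := DomMulAct.stabilizer_card f
    simp only [Fintype.card_subtype] at this
    simpa [hcont] using this
  have h2 : ∀ e ∈ Finset.piAntidiag (Finset.univ : Finset ι) d,
      (Finset.univ.filter (fun f => cont f = e)).card = Nat.multinomial Finset.univ e := by
    intro e he
    have h := Finset.sum_pow_eq_sum_piAntidiag (Finset.univ : Finset ι) (fun i => (X i : MvPolynomial ι ℤ)) d
    have h' : (∑ i, (X i : MvPolynomial ι ℤ)) ^ d = ∑ f : Fin d → ι, monomial (Finsupp.equivFunOnFinite.symm (cont f)) 1 := by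
      have := Finset.prod_univ_sum (fun _ : Fin d => (Finset.univ : Finset ι)) (fun _ o => (X o : MvPolynomial ι ℤ))
      rw [Fintype.piFinset_univ] at this
      simp only [Finset.prod_const, Finset.card_univ, Fintype.card_fin] at this
      rw [this]
      refine Finset.sum_congr rfl fun f _ => ?_
      rw [← Finset.prod_fiberwise Finset.univ f, MvPolynomial.monomial_eq]
      simp only [map_one, one_mul]
      rw [Finsupp.prod_fintype _ _ (by simp)]
      refine Finset.prod_congr rfl fun k _ => ?_
      simp only [Finsupp.equivFunOnFinite_symm_apply_apply, hcont]
      rw [← Finset.prod_const]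
      refine Finset.prod_congr rfl fun a ha => ?_
      rw [(Finset.mem_filter.1 ha).2]
    have h'' : ∀ k : ι → ℕ, ∏ i, (X i : MvPolynomial ι ℤ) ^ k i = monomial (Finsupp.equivFunOnFinite.symm k) 1 := by
      intro k
      rw [MvPolynomial.monomial_eq, Finsupp.prod_fintype _ _ (by simp)]
      simp
    rw [h'] at h
    simp_rw [h''] at h
    have hc := congrArg (coeff (Finsupp.equivFunOnFinite.symm e)) h
    simp only [coeff_sum, coeff_monomial, EmbeddingLike.apply_eq_iff_eq, ← C_eq_coe_nat, coeff_C_mul] at hc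
    simp only [mul_ite, mul_one, mul_zero, Finset.sum_ite_eq', he, if_true, Finset.sum_boole] at hc
    exact_mod_cast hc
  calc _ = ∑ f : Fin d → ι, ((∏ i, (cont f i).factorial : ℕ) : ℤ) * Ψ (cont f) := by
        simp_rw [Finset.sum_filter]
        rw [Finset.sum_comm]
        refine Finset.sum_congr rfl fun f _ => ?_
        rw [← Finset.sum_filter, Finset.sum_const, h1, nsmul_eq_mul]
    _ = ∑ e ∈ Finset.piAntidiag (Finset.univ : Finset ι) d, ∑ f ∈ Finset.univ.filter (fun f => cont f = e), ((∏ i, (cont f i).factorial : ℕ) : ℤ) * Ψ (cont f) := by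
        rw [Finset.sum_fiberwise_of_maps_to (fun f _ => cont_mem f)]
    _ = _ := by
        rw [Finset.mul_sum]
        refine Finset.sum_congr rfl fun e he => ?_
        rw [Finset.sum_congr rfl (g := fun _ => ((∏ i, (e i).factorial : ℕ) : ℤ) * Ψ e)
          (fun f hf => by rw [(Finset.mem_filter.1 hf).2]), Finset.sum_const, h2 e he]
        have := Nat.multinomial_spec Finset.univ e
        rw [(Finset.mem_piAntidiag.1 he).1] at this
        rw [← this]
        push_cast
        simp only [nsmul_eq_mul]
        ring
end ML
namespace ML

/-- generalized `permPowSum` -/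
noncomputable def pp {R : Type*} [CommRing R] {d : ℕ} (σ : Equiv.Perm (Fin d)) (ps : ℕ → R) : R :=
  (σ.cycleType.map ps).prod * (ps 1) ^ (d - σ.cycleType.sum)

theorem map_pp {R S : Type*} [CommRing R] [CommRing S] {d : ℕ} (σ : Equiv.Perm (Fin d))
    (ps : ℕ → R) (φ : R →+* S) : φ (pp σ ps) = pp σ (fun r => φ (ps r)) := by
  simp [pp, map_multiset_prod, Multiset.map_map]

theorem map_vand {R : Type*} [CommRing R] {N : ℕ} (φ : MvPolynomial (Fin N) ℤ →+* R) :
    φ (vandermonde N) = ∏ i, ∏ j, if i < j then φ (X i) - φ (X j) else 1 := by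
  rw [vandermonde, map_prod, Finset.prod_filter, ← Finset.univ_product_univ, Finset.prod_product]
  simp

theorem vand_eq (N : ℕ) : vandermonde N = ∏ i, ∏ j, if i < j then X i - X j else 1 :=
  map_vand (RingHom.id _)

theorem vand_det (N : ℕ) : vandermonde N =
    ∑ w : Equiv.Perm (Fin N), (Equiv.Perm.sign w : ℤ) •
      ∏ i, (X i : MvPolynomial (Fin N) ℤ) ^ (N - 1 - (w i : ℕ)) := by
  have h := Matrix.det_projVandermonde (fun _ : Fin N => (1 : MvPolynomial (Fin N) ℤ)) X
  rw [← Matrix.det_transpose, Matrix.det_apply'] at h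
  have h2 : vandermonde N = ∏ i : Fin N, ∏ j ∈ Finset.Ioi i, (1 * X i - 1 * X j) := by
    rw [vand_eq]
    refine Finset.prod_congr rfl fun i _ => ?_
    rw [← Finset.prod_filter]
    refine Finset.prod_congr ?_ fun j _ => by ring
    ext j; simp
  rw [h2, ← h]
  refine Finset.sum_congr rfl fun w _ => ?_
  rw [zsmul_eq_mul]
  congr 1
  refine Finset.prod_congr rfl fun i _ => ?_
  simp only [Matrix.transpose_apply, Matrix.projVandermonde, Matrix.rectVandermonde, Matrix.of_apply,
    one_pow, one_mul, Fin.val_rev]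
  congr 1
  omega

theorem prodX {n : ℕ} (k : Fin n → ℕ) : ∏ i, (X i : MvPolynomial (Fin n) ℤ) ^ k i =
    monomial (Finsupp.equivFunOnFinite.symm k) 1 := by
  rw [MvPolynomial.monomial_eq, Finsupp.prod_fintype _ _ (by simp)]
  simp

theorem coeff_last_zero {N : ℕ} (e : Fin (N + 1) →₀ ℕ) (he : e (Fin.last N) = 0)
    (F : MvPolynomial (Fin (N + 1)) ℤ) :
    coeff e F = coeff (Finsupp.equivFunOnFinite.symm fun i : Fin N => e i.castSucc)
      (aeval (Fin.snoc (α := fun _ => MvPolynomial (Fin N) ℤ) X 0) F) := by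
  induction F using MvPolynomial.induction_on' with
  | add p q hp hq => rw [coeff_add, hp, hq, map_add, coeff_add]
  | monomial u a =>
    rw [aeval_monomial, Finsupp.prod_fintype _ _ (by simp), Fin.prod_univ_castSucc]
    simp only [Fin.snoc_castSucc, Fin.snoc_last]
    rw [prodX, coeff_monomial]
    rw [algebraMap_eq]
    by_cases hu : u (Fin.last N) = 0
    · rw [hu, pow_zero, mul_one, coeff_C_mul, coeff_monomial]
      have : u = e ↔ (Finsupp.equivFunOnFinite.symm fun i : Fin N => u i.castSucc) = (Finsupp.equivFunOnFinite.symm fun i : Fin N => e i.castSucc) := by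
        rw [EmbeddingLike.apply_eq_iff_eq]
        constructor
        · rintro rfl; rfl
        · intro h
          ext i
          refine Fin.lastCases ?_ (fun i => ?_) i
          · rw [hu, he]
          · exact congrFun h i
      simp [this]
    · rw [zero_pow hu, if_neg]
      · simp
      · rintro rfl; exact hu he

theorem coeff_dehom {N : ℕ} (e : Fin (N + 1) →₀ ℕ)
    (F : MvPolynomial (Fin (N + 1)) ℤ) (hF : F.IsHomogeneous (∑ i, e i)) :
    coeff e F = coeff (Finsupp.equivFunOnFinite.symm fun i : Fin N => e i.succ)
      (aeval (Fin.cons (α := fun _ => MvPolynomial (Fin N) ℤ) 1 X) F) := by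
  conv_rhs => rw [F.as_sum]
  rw [map_sum, coeff_sum]
  have : ∀ u ∈ F.support, coeff (Finsupp.equivFunOnFinite.symm fun i : Fin N => e i.succ)
      (aeval (Fin.cons (α := fun _ => MvPolynomial (Fin N) ℤ) 1 X) (monomial u (coeff u F))) =
      if u = e then coeff e F else 0 := by
    intro u hu
    have hd := hF (mem_support_iff.1 hu)
    rw [Finsupp.weight_apply, Finsupp.sum_fintype _ _ (by simp)] at hd
    simp only [Pi.one_apply, smul_eq_mul, mul_one] at hd
    rw [Fin.sum_univ_succ, Fin.sum_univ_succ] at hd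
    rw [aeval_monomial, Finsupp.prod_fintype _ _ (by simp), Fin.prod_univ_succ]
    simp only [Fin.cons_zero, Fin.cons_succ, one_pow, one_mul]
    rw [prodX]
    rw [algebraMap_eq]
    rw [coeff_C_mul, coeff_monomial]
    have : u = e ↔ (Finsupp.equivFunOnFinite.symm fun i : Fin N => u i.succ) = (Finsupp.equivFunOnFinite.symm fun i : Fin N => e i.succ) := by
        rw [EmbeddingLike.apply_eq_iff_eq]
        constructor
        · rintro rfl; rfl
        · intro h
          ext i
          refine Fin.cases ?_ (fun i => ?_) i
          · have : ∀ i : Fin N, u i.succ = e i.succ := congrFun h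
            simp only [this] at hd
            omega
          · exact congrFun h i
    simp only [← this]
    by_cases h : u = e
    · simp [h]
    · simp [h]
  rw [Finset.sum_congr rfl this, Finset.sum_ite_eq']
  split_ifs with h
  · rfl
  · simpa using h

theorem vand_last (N : ℕ) : aeval (Fin.snoc (α := fun _ => MvPolynomial (Fin N) ℤ) X 0)
    (vandermonde (N + 1)) = vandermonde N * ∏ i, (X i : MvPolynomial (Fin N) ℤ) := by
  rw [← AlgHom.coe_toRingHom, map_vand]
  simp only [AlgHom.coe_toRingHom, aeval_X]
  simp only [Fin.prod_univ_castSucc, Fin.snoc_castSucc, Fin.snoc_last, Fin.castSucc_lt_castSucc_iff,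
    Fin.castSucc_lt_last, if_true, sub_zero, lt_self_iff_false, if_false, mul_one]
  rw [vand_eq, Finset.prod_mul_distrib, Finset.prod_eq_one (f := fun i : Fin N => if Fin.last N < i.castSucc then _ else _), mul_one]
  intro i _
  rw [if_neg]
  exact not_lt.2 (Fin.le_last _)

theorem vand_cons (N : ℕ) : aeval (Fin.cons (α := fun _ => MvPolynomial (Fin N) ℤ) 1 X)
    (vandermonde (N + 1)) = (∏ i, (1 - X i : MvPolynomial (Fin N) ℤ)) * vandermonde N := by
  rw [← AlgHom.coe_toRingHom, map_vand]
  simp only [AlgHom.coe_toRingHom, aeval_X]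
  simp only [Fin.prod_univ_succ, Fin.cons_succ, Fin.cons_zero, Fin.succ_lt_succ_iff,
    Fin.succ_pos, if_true, if_false, one_mul, Fin.not_lt_zero]
  rw [vand_eq]

theorem reduce {d N : ℕ} (σ : Equiv.Perm (Fin d)) (lam : ℕ → ℕ) (h : ∀ i, N ≤ i → lam i = 0)
    (d' : ℕ) (hd' : N ≤ d') :
    coeff (staircase d' lam) (vandermonde d' * pp σ (powSum d')) =
    coeff (staircase N lam) (vandermonde N * pp σ (powSum N)) := by
  induction d', hd' using Nat.le_induction with
  | base => rfl
  | succ k hk ih =>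
    rw [← ih, coeff_last_zero _ (by simp [staircase, h k hk])]
    have hp : aeval (Fin.snoc (α := fun _ => MvPolynomial (Fin k) ℤ) X 0) (pp σ (powSum (k+1))) = pp σ (powSum k) := by
      rw [← AlgHom.coe_toRingHom, map_pp]
      have hc : ∀ r, r ≠ 0 → aeval (Fin.snoc (α := fun _ => MvPolynomial (Fin k) ℤ) X 0) (powSum (k+1) r) = powSum k r := by
        intro r hr
        simp only [powSum, map_sum, map_pow, aeval_X]
        simp [Fin.sum_univ_castSucc, hr]
      rw [pp, pp]
      congr 1
      · congr 1
        refine Multiset.map_congr rfl fun r hr => hc r ?_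
        have := Equiv.Perm.one_lt_of_mem_cycleType hr
        omega
      · congr 1
        exact hc 1 one_ne_zero
    have hx : (∏ i, (X i : MvPolynomial (Fin k) ℤ)) = monomial (Finsupp.equivFunOnFinite.symm fun _ => 1) 1 := by
      rw [← prodX]; simp
    rw [map_mul, hp, vand_last, hx, mul_assoc, mul_comm (monomial _ _), ← mul_assoc]
    have he : (Finsupp.equivFunOnFinite.symm fun i : Fin k => staircase (k+1) lam i.castSucc) = staircase k lam + Finsupp.equivFunOnFinite.symm fun _ => 1 := by
      ext i
      simp [staircase]
      omega
    rw [he, coeff_mul_monomial, mul_one]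

theorem psize_eq {nv : ℕ} (l : ℕ →₀ ℕ) (h : ∀ i, nv ≤ i → l i = 0) : psize l = ∑ i : Fin nv, l i := by
  rw [psize, Finsupp.sum_of_support_subset l (s := Finset.range nv), Finset.sum_range]
  · intro i hi
    rw [Finset.mem_range]
    by_contra hc
    exact (Finsupp.mem_support_iff.1 hi) (h i (not_lt.1 hc))
  · simp

theorem vand_hom (N : ℕ) : (vandermonde N).IsHomogeneous (∑ i : Fin N, (N - 1 - (i : ℕ))) := by
  rw [vand_det]
  refine IsHomogeneous.sum _ _ _ fun w _ => ?_
  rw [← Int.cast_smul_eq_zsmul ℤ, smul_eq_C_mul, ← zero_add (∑ i : Fin N, (N - 1 - (i : ℕ)))]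
  refine (isHomogeneous_C _ _).mul ?_
  rw [← Equiv.sum_comp w]
  exact IsHomogeneous.prod _ _ _ fun i _ => isHomogeneous_X_pow _ _

theorem pp_hom {d : ℕ} (N : ℕ) (σ : Equiv.Perm (Fin d)) : (pp σ (powSum N)).IsHomogeneous d := by
  have := cyc_expand σ (fun i : Fin N => (X i : MvPolynomial (Fin N) ℤ))
  rw [Fintype.card_fin] at this
  have h2 : pp σ (powSum N) = _ := this
  rw [h2]
  refine IsHomogeneous.sum _ _ _ fun f _ => ?_
  have := IsHomogeneous.prod Finset.univ (fun a => (X (f a) : MvPolynomial (Fin N) ℤ)) (fun _ => 1)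
    fun i _ => isHomogeneous_X _ _
  simpa using this

theorem reduce2 {d nv : ℕ} (σ : Equiv.Perm (Fin d)) (l : ℕ →₀ ℕ) (h : ∀ i, nv ≤ i → l i = 0)
    (hd : psize l ≤ d) :
    coeff (staircase (nv + 1) (pad l d)) (vandermonde (nv + 1) * pp σ (powSum (nv + 1))) =
    coeff (staircase nv l) (vandermonde nv * ((∏ i, (1 - X i)) * 
      pp σ (fun r => ∑ o : Option (Fin nv), (o.elim 1 X) ^ r))) := by
  rw [coeff_dehom]
  · have hp : aeval (Fin.cons (α := fun _ => MvPolynomial (Fin nv) ℤ) 1 X) (pp σ (powSum (nv+1))) =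
        pp σ (fun r => ∑ o : Option (Fin nv), (o.elim 1 X) ^ r) := by
      rw [← AlgHom.coe_toRingHom, map_pp]
      simp only [AlgHom.coe_toRingHom, powSum, map_sum, map_pow, aeval_X]
      simp only [Fin.sum_univ_succ, Fin.cons_succ, Fin.cons_zero, Fintype.sum_option, Option.elim]
    rw [map_mul, hp, vand_cons, mul_assoc, mul_left_comm]
    congr 1
    ext i
    simp [staircase, pad]
    omega
  · have := (vand_hom (nv+1)).mul (pp_hom (nv+1) σ)
    convert this using 1
    simp only [staircase, Finsupp.equivFunOnFinite_symm_apply_apply]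
    rw [Finset.sum_add_distrib, add_comm, Fin.sum_univ_succ (fun i : Fin (nv+1) => pad l d i)]
    simp only [pad, Fin.val_zero, if_true, Fin.val_succ, Nat.succ_ne_zero, if_false, Nat.add_sub_cancel]
    rw [← psize_eq l h]
    omega

theorem chi_eq {d nv : ℕ} (σ : Equiv.Perm (Fin d)) (l : ℕ →₀ ℕ) (h : ∀ i, nv ≤ i → l i = 0)
    (hd : psize l ≤ d) (hnd : nv + 1 ≤ d) :
    chi d (pad l d) σ = ∑ f : Fin d → Option (Fin nv) with (f ∘ σ = f),
    coeff (staircase nv l) (vandermonde nv * ((∏ i, (1 - X i)) * ∏ a, (f a).elim 1 X)) := by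
  have h0 : chi d (pad l d) σ = coeff (staircase d (pad l d)) (vandermonde d * pp σ (powSum d)) := rfl
  rw [h0, reduce σ _ (N := nv + 1) _ d hnd, reduce2 σ l h hd]
  · have := cyc_expand σ (fun o : Option (Fin nv) => (o.elim 1 X : MvPolynomial (Fin nv) ℤ))
    rw [Fintype.card_fin] at this
    have h2 : pp σ (fun r => ∑ o : Option (Fin nv), (o.elim 1 X : MvPolynomial (Fin nv) ℤ) ^ r) = _ := this
    rw [h2, Finset.mul_sum, Finset.mul_sum, coeff_sum]
  · intro i hi
    rw [pad, if_neg (by omega)]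
    exact h _ (by omega)

end ML
namespace ML

noncomputable def l0 (nv : ℕ) (lam : ℕ → ℕ) (α : Fin nv → ℕ) : ℤ :=
  coeff (staircase nv lam) (vandermonde nv * ∏ i, X i ^ α i)

noncomputable def lx (nv : ℕ) (lam : ℕ → ℕ) (α : Fin nv → ℕ) : ℤ :=
  coeff (staircase nv lam) (vandermonde nv * ((∏ i, (1 - X i)) * ∏ i, X i ^ α i))

def box (M : ℕ) (κ : Type*) [Fintype κ] [DecidableEq κ] : Finset (κ → ℕ) :=
  Fintype.piFinset (fun _ : κ => Finset.range (M + 1))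

theorem mem_box {M : ℕ} {κ : Type*} [Fintype κ] [DecidableEq κ] {a : κ → ℕ} :
    a ∈ box M κ ↔ ∀ k, a k ≤ M := by
  simp [box]

theorem lx_le {nv : ℕ} {lam : ℕ → ℕ} {α : Fin nv → ℕ} (h : lx nv lam α ≠ 0) (i : Fin nv) :
    α i ≤ lam i + nv := by
  rw [lx, prodX, ← mul_assoc, coeff_mul_monomial'] at h
  by_contra hc
  apply h
  rw [if_neg]
  intro hle
  have := hle i
  simp [staircase] at this
  omega

theorem geom {nv : ℕ} {lam : ℕ → ℕ} {M : ℕ} (hM : ∀ i : Fin nv, lam i + nv ≤ M) (r : Fin nv → ℕ) :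
    ∑ a ∈ box M (Fin nv), lx nv lam (fun i => a i + r i) = l0 nv lam r := by
  have h1 : ∑ a ∈ box M (Fin nv), ∏ i, (X i : MvPolynomial (Fin nv) ℤ) ^ a i =
      ∏ i, ∑ k ∈ Finset.range (M + 1), (X i : MvPolynomial (Fin nv) ℤ) ^ k :=
    (Finset.prod_univ_sum (fun _ : Fin nv => Finset.range (M+1)) (fun i k => (X i : MvPolynomial (Fin nv) ℤ) ^ k)).symm
  have h2 : (∏ i, (1 - X i : MvPolynomial (Fin nv) ℤ)) * ∏ i, ∑ k ∈ Finset.range (M + 1), (X i : MvPolynomial (Fin nv) ℤ) ^ k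
      = ∏ i, (1 - (X i : MvPolynomial (Fin nv) ℤ) ^ (M+1)) := by
    rw [← Finset.prod_mul_distrib]
    exact Finset.prod_congr rfl fun i _ => mul_neg_geom_sum _ _
  have h3 : ∀ s : Finset (Fin nv), ∀ P : MvPolynomial (Fin nv) ℤ, coeff (staircase nv lam) (P * ∏ i ∈ s, (1 - (X i : MvPolynomial (Fin nv) ℤ) ^ (M+1))) = coeff (staircase nv lam) P := by
    intro s
    induction s using Finset.induction_on with
    | empty => intro P; simp
    | insert i s hi ih =>
      intro P
      rw [Finset.prod_insert hi, ← mul_assoc, ih, mul_sub, mul_one, coeff_sub, X_pow_eq_monomial, coeff_mul_monomial', if_neg, sub_zero]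
      intro hle
      have := hle i
      have := hM i
      simp [staircase] at *
      omega
  simp only [lx, ← coeff_sum, pow_add, Finset.prod_mul_distrib]
  rw [← Finset.mul_sum, ← Finset.mul_sum, ← Finset.sum_mul, h1, ← mul_assoc (∏ i, (1 - X i)), h2, l0,
    mul_comm (∏ i, (1 - _)), ← mul_assoc, h3]

theorem l0_eq {nv : ℕ} (lam : ℕ → ℕ) (α : Fin nv → ℕ) : l0 nv lam α =
    ∑ w : Equiv.Perm (Fin nv), (Equiv.Perm.sign w : ℤ) *
      ∏ i, if α i + (nv - 1 - (w i : ℕ)) = lam i + (nv - 1 - (i : ℕ)) then 1 else 0 := by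
  rw [l0, vand_det, Finset.sum_mul, coeff_sum]
  refine Finset.sum_congr rfl fun w _ => ?_
  rw [smul_mul_assoc, coeff_smul, ← Finset.prod_mul_distrib, smul_eq_mul]
  simp_rw [← pow_add]
  rw [prodX, coeff_monomial]
  congr 1
  rw [staircase]
  by_cases h : ∀ i : Fin nv, α i + (nv - 1 - (w i : ℕ)) = lam i + (nv - 1 - (i : ℕ))
  · rw [if_pos, Finset.prod_eq_one]
    · intro i _
      rw [if_pos (h i)]
    · ext i
      simpa [add_comm] using h i
  · rw [if_neg]
    · push Not at h
      obtain ⟨i, hi⟩ := h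
      rw [Finset.prod_eq_zero (Finset.mem_univ i)]
      rw [if_neg hi]
    · intro hf
      apply h
      intro i
      have := DFunLike.congr_fun hf i
      simpa [add_comm] using this

theorem l0_deg {nv : ℕ} {lam : ℕ → ℕ} {α : Fin nv → ℕ} (h : l0 nv lam α ≠ 0) :
    ∑ i, α i = ∑ i : Fin nv, lam i := by
  rw [l0_eq] at h
  obtain ⟨w, _, hw⟩ := Finset.exists_ne_zero_of_sum_ne_zero h
  have h2 := right_ne_zero_of_mul hw
  have h3 : ∀ i ∈ Finset.univ, α i + (nv - 1 - (w i : ℕ)) = lam i + (nv - 1 - (i : ℕ)) := fun i hi => by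
    by_contra hc
    exact h2 (Finset.prod_eq_zero hi (if_neg hc))
  have h4 := Finset.sum_congr rfl h3
  rw [Finset.sum_add_distrib, Finset.sum_add_distrib, Equiv.sum_comp w (fun i : Fin nv => nv - 1 - (i : ℕ))] at h4
  omega

theorem schur_eq {nv : ℕ} {lam : ℕ → ℕ} {M : ℕ} (hM : ∀ i : Fin nv, lam i + nv ≤ M) :
    ∑ Q ∈ box M (Fin nv × Fin nv), C (l0 nv lam (fun i => ∑ k, Q (i, k))) *
      ∏ k, (X k : MvPolynomial (Fin nv) ℤ) ^ (∑ i, Q (i, k)) = schur nv lam := by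
  have h1 : ∀ F : (Fin nv × Fin nv → ℕ) → MvPolynomial (Fin nv) ℤ,
      ∑ Q ∈ box M (Fin nv × Fin nv), F Q =
      ∑ q ∈ Fintype.piFinset (fun _ : Fin nv => box M (Fin nv)), F (fun p => q p.1 p.2) := by
    intro F
    refine Finset.sum_nbij' (fun Q i k => Q (i, k)) (fun q p => q p.1 p.2) ?_ ?_ ?_ ?_ ?_
    · intro Q hQ
      rw [mem_box] at hQ
      rw [Fintype.mem_piFinset]
      exact fun i => mem_box.2 fun k => hQ _
    · intro q hq
      rw [Fintype.mem_piFinset] at hq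
      exact mem_box.2 fun p => mem_box.1 (hq _) _
    · intro Q _; rfl
    · intro q _; rfl
    · intro Q _; rfl
  rw [h1, schur, ← Matrix.det_transpose, Matrix.det_apply']
  simp only [l0_eq, map_sum, Finset.sum_mul]
  rw [Finset.sum_comm]
  refine Finset.sum_congr rfl fun w _ => ?_
  have h2 : ∀ z : ℤ, z ≤ M → ∀ i : Fin nv, hsymInt nv z = ∑ q ∈ box M (Fin nv), if ((∑ k, q k : ℕ) : ℤ) = z then ∏ k, (X k : MvPolynomial (Fin nv) ℤ) ^ q k else 0 := by
    intro z hz _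
    rw [hsymInt]
    split_ifs with h0
    · symm
      apply Finset.sum_eq_zero
      intro q _
      rw [if_neg]
      omega
    · obtain ⟨r, rfl⟩ := Int.eq_ofNat_of_zero_le (not_lt.1 h0)
      rw [hsym, ← Finset.sum_filter]
      refine Finset.sum_nbij' (fun e => (e : Fin nv → ℕ)) (fun q => Finsupp.equivFunOnFinite.symm q) ?_ ?_ ?_ ?_ ?_
      · intro e he
        replace he : ∑ k, e k = r := by simpa using he
        rw [Finset.mem_filter, mem_box]
        refine ⟨fun k => ?_, by exact_mod_cast he⟩
        have := Finset.single_le_sum (f := e) (fun _ _ => Nat.zero_le _) (Finset.mem_univ k)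
        omega
      · intro q hq
        rw [Finset.mem_filter] at hq
        simp
        exact_mod_cast hq.2
      · intro e _; ext; simp
      · intro q _; rfl
      · intro e _
        rw [prodX]; congr 1; ext; simp
  have h3 : ∀ i : Fin nv, hsymInt nv ((lam i : ℤ) - i + (w i : ℕ)) = ∑ q ∈ box M (Fin nv), if ∑ k, q k + (nv - 1 - (w i : ℕ)) = lam i + (nv - 1 - (i : ℕ)) then ∏ k, (X k : MvPolynomial (Fin nv) ℤ) ^ q k else 0 := by
    intro i
    have hMi := hM i
    have hi := i.2
    have hwi := (w i).2
    rw [h2 _ (by omega) i]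
    refine Finset.sum_congr rfl fun q _ => if_congr ?_ rfl rfl
    omega
  simp only [Matrix.transpose_apply, Matrix.of_apply]
  simp_rw [h3]
  rw [Finset.prod_univ_sum, Finset.mul_sum]
  refine Finset.sum_congr rfl fun q _ => ?_
  rw [map_mul, mul_assoc]
  congr 1
  simp_rw [← Finset.prod_pow_eq_pow_sum]
  rw [Finset.prod_comm, map_prod, ← Finset.prod_mul_distrib]
  refine Finset.prod_congr rfl fun i _ => ?_
  split_ifs <;> simp

abbrev O3 (nv : ℕ) := Option (Fin nv) × Option (Fin nv) × Option (Fin nv)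

theorem monom_cont {nv d : ℕ} (f : Fin d → Option (Fin nv)) :
    ∏ a, ((f a).elim 1 X : MvPolynomial (Fin nv) ℤ) =
    ∏ i, X i ^ (Finset.univ.filter (fun a => f a = some i)).card := by
  rw [← Finset.prod_fiberwise Finset.univ f, Fintype.prod_option]
  rw [Finset.prod_eq_one, one_mul]
  · refine Finset.prod_congr rfl fun i _ => ?_
    rw [← Finset.prod_const]
    refine Finset.prod_congr rfl fun a ha => ?_
    rw [(Finset.mem_filter.1 ha).2]; rfl
  · intro a ha
    rw [(Finset.mem_filter.1 ha).2]; rfl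

noncomputable def Psi (nv : ℕ) (l m n : ℕ → ℕ) (e : O3 nv → ℕ) : ℤ :=
  lx nv l (fun i => ∑ j, ∑ k, e (some i, j, k)) * lx nv m (fun i => ∑ j, ∑ k, e (j, some i, k)) *
    lx nv n (fun i => ∑ j, ∑ k, e (j, k, some i))

theorem sum_chi {nv : ℕ} (l m n : ℕ →₀ ℕ) (hl : ∀ i, nv ≤ i → l i = 0) (hm : ∀ i, nv ≤ i → m i = 0)
    (hn : ∀ i, nv ≤ i → n i = 0) (d : ℕ) (hld : psize l ≤ d) (hmd : psize m ≤ d) (hnd : psize n ≤ d)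
    (hd : nv + 1 ≤ d) :
    gKron d (pad l d) (pad m d) (pad n d) =
      ∑ e ∈ Finset.piAntidiag (Finset.univ : Finset (O3 nv)) d, Psi nv l m n e := by
  rw [gKron]
  apply Int.ediv_eq_of_eq_mul_right (by exact_mod_cast d.factorial_ne_zero)
  rw [← burnside]
  refine Finset.sum_congr rfl fun σ _ => ?_
  rw [chi_eq σ l hl hld hd, chi_eq σ m hm hmd hd, chi_eq σ n hn hnd hd]
  simp_rw [monom_cont]
  have key : ∀ (A B D : (Fin d → Option (Fin nv)) → ℤ),
      (∑ f with (f ∘ σ = f), A f) * (∑ f with (f ∘ σ = f), B f) * (∑ f with (f ∘ σ = f), D f) =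
      ∑ F : Fin d → O3 nv with (F ∘ σ = F), A (fun a => (F a).1) * B (fun a => (F a).2.1) * D (fun a => (F a).2.2) := by
    intro A B D
    rw [Finset.sum_mul_sum, ← Finset.sum_product', Finset.sum_mul_sum, ← Finset.sum_product']
    refine Finset.sum_nbij' (fun p a => (p.1.1 a, p.1.2 a, p.2 a)) (fun F => ((fun a => (F a).1, fun a => (F a).2.1), fun a => (F a).2.2)) ?_ ?_ ?_ ?_ ?_
    · rintro ⟨⟨f, g⟩, h⟩ hp
      simp only [Finset.mem_product, Finset.mem_filter, Finset.mem_univ, true_and, funext_iff, Function.comp] at hp ⊢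
      intro a
      rw [hp.1.1, hp.1.2, hp.2]
    · intro F hF
      simp only [Finset.mem_product, Finset.mem_filter, Finset.mem_univ, true_and, funext_iff, Function.comp] at hF ⊢
      refine ⟨⟨fun a => ?_, fun a => ?_⟩, fun a => ?_⟩ <;> rw [hF]
    · rintro ⟨⟨f, g⟩, h⟩ hp; rfl
    · intro F _; rfl
    · rintro ⟨⟨f, g⟩, h⟩ hp; rfl
  rw [key]
  refine Finset.sum_congr rfl fun F _ => ?_
  have c1 : ∀ i, (Finset.univ.filter (fun a => (F a).1 = some i)).card = ∑ j, ∑ k, (Finset.univ.filter (fun a => F a = (some i, j, k))).card := by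
    intro i
    rw [← Finset.sum_product', Finset.card_eq_sum_card_fiberwise (f := fun a => (F a).2) (t := Finset.univ ×ˢ Finset.univ) (fun _ _ => by simp)]
    refine Finset.sum_congr rfl fun p _ => ?_
    congr 1
    ext a
    simp [Prod.ext_iff]
  have c2 : ∀ i, (Finset.univ.filter (fun a => (F a).2.1 = some i)).card = ∑ j, ∑ k, (Finset.univ.filter (fun a => F a = (j, some i, k))).card := by
    intro i
    rw [← Finset.sum_product', Finset.card_eq_sum_card_fiberwise (f := fun a => ((F a).1, (F a).2.2)) (t := Finset.univ ×ˢ Finset.univ) (fun _ _ => by simp)]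
    refine Finset.sum_congr rfl fun p _ => ?_
    congr 1
    ext a
    simp [Prod.ext_iff]
    tauto
  have c3 : ∀ i, (Finset.univ.filter (fun a => (F a).2.2 = some i)).card = ∑ j, ∑ k, (Finset.univ.filter (fun a => F a = (j, k, some i))).card := by
    intro i
    rw [← Finset.sum_product', Finset.card_eq_sum_card_fiberwise (f := fun a => ((F a).1, (F a).2.1)) (t := Finset.univ ×ˢ Finset.univ) (fun _ _ => by simp)]
    refine Finset.sum_congr rfl fun p _ => ?_
    congr 1
    ext a
    simp [Prod.ext_iff]
    tauto
  simp only [Psi, lx, c1, c2, c3]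

end ML
namespace ML

theorem zero_of_sum {κ : Type*} [Fintype κ] (f : κ → ℕ) (h : ∑ k, f k = 0) : f = 0 := by
  funext k
  exact Finset.sum_eq_zero_iff.1 h k (Finset.mem_univ _)

abbrev F1 (nv : ℕ) := Fin nv → ℕ
abbrev F2 (nv : ℕ) := Fin nv × Fin nv → ℕ
abbrev F3 (nv : ℕ) := Fin nv × Fin nv × Fin nv → ℕ

/-- tuples `(S, P, Q, R, a, b, c)` -/
abbrev Tup (nv : ℕ) := F3 nv × F2 nv × F2 nv × F2 nv × F1 nv × F1 nv × F1 nv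

def boxT (M nv : ℕ) : Finset (Tup nv) :=
  box M _ ×ˢ box M _ ×ˢ box M _ ×ˢ box M _ ×ˢ box M _ ×ˢ box M _ ×ˢ box M _

def tot {nv : ℕ} (t : Tup nv) : ℕ :=
  ∑ p, t.1 p + ∑ p, t.2.1 p + ∑ p, t.2.2.1 p + ∑ p, t.2.2.2.1 p + ∑ p, t.2.2.2.2.1 p
    + ∑ p, t.2.2.2.2.2.1 p + ∑ p, t.2.2.2.2.2.2 p

def emb {nv : ℕ} (d : ℕ) (t : Tup nv) : O3 nv → ℕ
  | (none, none, none) => d - tot t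
  | (some i, none, none) => t.2.2.2.2.1 i
  | (none, some i, none) => t.2.2.2.2.2.1 i
  | (none, none, some i) => t.2.2.2.2.2.2 i
  | (some i, some j, none) => t.2.1 (i, j)
  | (some i, none, some j) => t.2.2.1 (i, j)
  | (none, some i, some j) => t.2.2.2.1 (i, j)
  | (some i, some j, some k) => t.1 (i, j, k)

def ext {nv : ℕ} (e : O3 nv → ℕ) : Tup nv :=
  (fun p => e (some p.1, some p.2.1, some p.2.2), fun p => e (some p.1, some p.2, none),
    fun p => e (some p.1, none, some p.2), fun p => e (none, some p.1, some p.2),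
    fun i => e (some i, none, none), fun i => e (none, some i, none), fun i => e (none, none, some i))

theorem ext_emb {nv d : ℕ} (t : Tup nv) : ext (emb d t) = t := rfl

theorem sum_O3 {nv : ℕ} (e : O3 nv → ℕ) : ∑ p, e p = e (none, none, none) + tot (ext e) := by
  simp only [Fintype.sum_prod_type, Fintype.sum_option, tot, ext, Finset.sum_add_distrib]
  omega

theorem emb_ext {nv d : ℕ} (e : O3 nv → ℕ) (h : ∑ p, e p = d) : emb d (ext e) = e := by
  rw [sum_O3] at h
  funext ⟨i, j, k⟩
  rcases i with _ | i <;> rcases j with _ | j <;> rcases k with _ | k <;> simp only [emb]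
  · omega
  all_goals rfl

theorem mem_boxT {M nv : ℕ} {t : Tup nv} : t ∈ boxT M nv ↔
    t.1 ∈ box M _ ∧ t.2.1 ∈ box M _ ∧ t.2.2.1 ∈ box M _ ∧ t.2.2.2.1 ∈ box M _ ∧ t.2.2.2.2.1 ∈ box M _
    ∧ t.2.2.2.2.2.1 ∈ box M _ ∧ t.2.2.2.2.2.2 ∈ box M _ := by
  simp [boxT, Finset.mem_product]

theorem sum_le_box {M : ℕ} {κ : Type*} [Fintype κ] [DecidableEq κ] {a : κ → ℕ} (h : a ∈ box M κ) :
    ∑ k, a k ≤ Fintype.card κ * M := by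
  have := Finset.sum_le_card_nsmul Finset.univ a M (fun k _ => mem_box.1 h k)
  simpa using this

theorem tot_le {M nv : ℕ} {t : Tup nv} (h : t ∈ boxT M nv) :
    tot t ≤ (nv * (nv * nv)) * M + 3 * ((nv * nv) * M) + 3 * (nv * M) := by
  obtain ⟨h1, h2, h3, h4, h5, h6, h7⟩ := mem_boxT.1 h
  have h1 := sum_le_box h1
  have h2 := sum_le_box h2
  have h3 := sum_le_box h3
  have h4 := sum_le_box h4
  have h5 := sum_le_box h5
  have h6 := sum_le_box h6
  have h7 := sum_le_box h7
  simp only [Fintype.card_prod, Fintype.card_fin] at h1 h2 h3 h4 h5 h6 h7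
  rw [tot]
  omega

theorem sum_emb {nv M d : ℕ} (l m n : ℕ → ℕ) (hl : ∀ i : Fin nv, l i + nv ≤ M)
    (hm : ∀ i : Fin nv, m i + nv ≤ M) (hn : ∀ i : Fin nv, n i + nv ≤ M)
    (hd : (nv * (nv * nv)) * M + 3 * ((nv * nv) * M) + 3 * (nv * M) ≤ d) :
    ∑ e ∈ Finset.piAntidiag (Finset.univ : Finset (O3 nv)) d, Psi nv l m n e =
    ∑ t ∈ boxT M nv, Psi nv l m n (emb d t) := by
  symm
  refine Finset.sum_of_injOn (emb d) ?_ ?_ ?_ (fun _ _ => rfl)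
  · intro t _ t' _ h
    rw [← ext_emb (d := d) t, h, ext_emb]
  · intro t ht
    have := tot_le ht
    simp only [Finset.mem_coe, Finset.mem_piAntidiag, Finset.mem_univ, implies_true, and_true]
    rw [sum_O3, ext_emb]
    simp only [emb]
    omega
  · intro e he hne
    by_contra hP
    apply hne
    refine ⟨ext e, ?_, emb_ext e (Finset.mem_piAntidiag.1 he).1⟩
    rw [Psi] at hP
    have hx := fun i => (lx_le (left_ne_zero_of_mul (left_ne_zero_of_mul hP)) i).trans (hl i)
    have hy := fun i => (lx_le (right_ne_zero_of_mul (left_ne_zero_of_mul hP)) i).trans (hm i)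
    have hz := fun i => (lx_le (right_ne_zero_of_mul hP) i).trans (hn i)
    have s2 : ∀ (f : Option (Fin nv) → Option (Fin nv) → ℕ) j k, f j k ≤ ∑ j, ∑ k, f j k := fun f j k =>
      (Finset.single_le_sum (f := fun k => f j k) (fun _ _ => Nat.zero_le _) (Finset.mem_univ k)).trans
      (Finset.single_le_sum (f := fun j => ∑ k, f j k) (fun _ _ => Nat.zero_le _) (Finset.mem_univ j))
    have hx' : ∀ i j k, e (some i, j, k) ≤ M := fun i j k => (s2 (fun j k => e (some i, j, k)) j k).trans (hx i)
    have hy' : ∀ i j k, e (j, some i, k) ≤ M := fun i j k => (s2 (fun j k => e (j, some i, k)) j k).trans (hy i)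
    have hz' : ∀ i j k, e (j, k, some i) ≤ M := fun i j k => (s2 (fun j k => e (j, k, some i)) j k).trans (hz i)
    simp only [Finset.mem_coe, mem_boxT, mem_box, ext]
    exact ⟨fun _ => hx' _ _ _, fun _ => hx' _ _ _, fun _ => hx' _ _ _, fun _ => hy' _ _ _,
      fun _ => hx' _ _ _, fun _ => hy' _ _ _, fun _ => hz' _ _ _⟩

theorem Psi_emb {nv d : ℕ} (l m n : ℕ → ℕ) (S : F3 nv) (P Q R : F2 nv) (a b c : F1 nv) :
    Psi nv l m n (emb d (S, P, Q, R, a, b, c)) =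
    lx nv l (fun i => a i + (∑ j, P (i, j) + ∑ j, Q (i, j) + ∑ j, ∑ k, S (i, j, k))) *
    lx nv m (fun i => b i + (∑ j, P (j, i) + ∑ j, R (i, j) + ∑ j, ∑ k, S (j, i, k))) *
    lx nv n (fun i => c i + (∑ j, Q (j, i) + ∑ j, R (j, i) + ∑ j, ∑ k, S (j, k, i))) := by
  simp only [Psi, Fintype.sum_option, emb, Finset.sum_add_distrib]
  congr 1
  · congr 1
    · congr 1; funext i; ring
    · congr 1; funext i; ring
  · congr 1; funext i; ring

theorem sum_abc {nv M d : ℕ} (l m n : ℕ → ℕ) (hl : ∀ i : Fin nv, l i + nv ≤ M)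
    (hm : ∀ i : Fin nv, m i + nv ≤ M) (hn : ∀ i : Fin nv, n i + nv ≤ M) :
    ∑ t ∈ boxT M nv, Psi nv l m n (emb d t) =
    ∑ S ∈ box M (Fin nv × Fin nv × Fin nv), ∑ P ∈ box M (Fin nv × Fin nv), ∑ Q ∈ box M (Fin nv × Fin nv),
      ∑ R ∈ box M (Fin nv × Fin nv),
    l0 nv l (fun i => (∑ j, P (i, j) + ∑ j, Q (i, j) + ∑ j, ∑ k, S (i, j, k))) *
    l0 nv m (fun i => (∑ j, P (j, i) + ∑ j, R (i, j) + ∑ j, ∑ k, S (j, i, k))) *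
    l0 nv n (fun i => (∑ j, Q (j, i) + ∑ j, R (j, i) + ∑ j, ∑ k, S (j, k, i))) := by
  rw [boxT]
  simp only [Finset.sum_product]
  refine Finset.sum_congr rfl fun S _ => Finset.sum_congr rfl fun P _ => Finset.sum_congr rfl fun Q _ =>
    Finset.sum_congr rfl fun R _ => ?_
  simp only [Psi_emb]
  simp only [← Finset.mul_sum, ← Finset.sum_mul, geom hl, geom hm, geom hn]

theorem sum_QR {nv M : ℕ} (l m n : ℕ → ℕ) 
    (hs : ∑ i : Fin nv, n i = ∑ i : Fin nv, l i + ∑ i : Fin nv, m i) :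
    ∑ S ∈ box M (Fin nv × Fin nv × Fin nv), ∑ P ∈ box M (Fin nv × Fin nv), ∑ Q ∈ box M (Fin nv × Fin nv),
      ∑ R ∈ box M (Fin nv × Fin nv),
    l0 nv l (fun i => (∑ j, P (i, j) + ∑ j, Q (i, j) + ∑ j, ∑ k, S (i, j, k))) *
    l0 nv m (fun i => (∑ j, P (j, i) + ∑ j, R (i, j) + ∑ j, ∑ k, S (j, i, k))) *
    l0 nv n (fun i => (∑ j, Q (j, i) + ∑ j, R (j, i) + ∑ j, ∑ k, S (j, k, i))) =
    ∑ Q ∈ box M (Fin nv × Fin nv), ∑ R ∈ box M (Fin nv × Fin nv),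
    l0 nv l (fun i => ∑ j, Q (i, j)) * l0 nv m (fun i => ∑ j, R (i, j)) *
    l0 nv n (fun i => (∑ j, Q (j, i) + ∑ j, R (j, i))) := by
  have key : ∀ (S : F3 nv) (P Q R : F2 nv),
      l0 nv l (fun i => (∑ j, P (i, j) + ∑ j, Q (i, j) + ∑ j, ∑ k, S (i, j, k))) *
      l0 nv m (fun i => (∑ j, P (j, i) + ∑ j, R (i, j) + ∑ j, ∑ k, S (j, i, k))) *
      l0 nv n (fun i => (∑ j, Q (j, i) + ∑ j, R (j, i) + ∑ j, ∑ k, S (j, k, i))) ≠ 0 → S = 0 ∧ P = 0 := by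
    intro S P Q R h
    have h1 := l0_deg (left_ne_zero_of_mul (left_ne_zero_of_mul h))
    have h2 := l0_deg (right_ne_zero_of_mul (left_ne_zero_of_mul h))
    have h3 := l0_deg (right_ne_zero_of_mul h)
    simp only [Finset.sum_add_distrib] at h1 h2 h3
    have hc : ∀ T : F2 nv, ∑ x, ∑ y, T (y, x) = ∑ x, ∑ y, T (x, y) := fun T => Finset.sum_comm
    have hS2 : ∑ x, ∑ y, ∑ z, S (y, x, z) = ∑ x, ∑ y, ∑ z, S (x, y, z) := Finset.sum_comm
    have hS3 : ∑ x, ∑ y, ∑ z, S (y, z, x) = ∑ x, ∑ y, ∑ z, S (x, y, z) := by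
      rw [Finset.sum_comm]
      refine Finset.sum_congr rfl fun y _ => Finset.sum_comm
    rw [hc P, hS2] at h2
    rw [hc Q, hc R, hS3] at h3
    constructor
    · apply zero_of_sum
      simp only [Fintype.sum_prod_type]
      omega
    · apply zero_of_sum
      simp only [Fintype.sum_prod_type]
      omega
  have z3 : (0 : F3 nv) ∈ box M (Fin nv × Fin nv × Fin nv) := mem_box.2 fun _ => Nat.zero_le _
  have z2 : (0 : F2 nv) ∈ box M (Fin nv × Fin nv) := mem_box.2 fun _ => Nat.zero_le _
  rw [Finset.sum_eq_single_of_mem 0 z3, Finset.sum_eq_single_of_mem 0 z2]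
  · simp
  · intro P _ hP
    refine Finset.sum_eq_zero fun Q _ => Finset.sum_eq_zero fun R _ => ?_
    by_contra hne
    exact hP (key _ _ _ _ hne).2
  · intro S _ hS
    refine Finset.sum_eq_zero fun P _ => Finset.sum_eq_zero fun Q _ => Finset.sum_eq_zero fun R _ => ?_
    by_contra hne
    exact hS (key _ _ _ _ hne).1

theorem lr_eq {nv M : ℕ} (l m n : ℕ → ℕ) (hl : ∀ i : Fin nv, l i + nv ≤ M)
    (hm : ∀ i : Fin nv, m i + nv ≤ M) :
    ∑ Q ∈ box M (Fin nv × Fin nv), ∑ R ∈ box M (Fin nv × Fin nv),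
    l0 nv l (fun i => ∑ j, Q (i, j)) * l0 nv m (fun i => ∑ j, R (i, j)) *
    l0 nv n (fun i => (∑ j, Q (j, i) + ∑ j, R (j, i))) = lrCoeff nv l m n := by
  rw [lrCoeff, ← schur_eq hl, ← schur_eq hm, mul_assoc, Finset.sum_mul_sum, Finset.mul_sum, coeff_sum]
  refine Finset.sum_congr rfl fun Q _ => ?_
  rw [Finset.mul_sum, coeff_sum]
  refine Finset.sum_congr rfl fun R _ => ?_
  rw [mul_mul_mul_comm, ← C_mul, mul_left_comm, coeff_C_mul, ← Finset.prod_mul_distrib]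
  simp_rw [← pow_add]
  rfl

end ML

/-- Murnaghan–Littlewood theorem in stable form: if `|ν| = |λ| + |μ|` then for all `d`
large enough, `g_{λ[d],μ[d]}^{ν[d]} = c_{λμ}^ν`, i.e. `ḡ_{λμ}^ν = c_{λμ}^ν`. -/
theorem murnaghan_littlewood (l m n : ℕ →₀ ℕ) (hl : IsPtn l) (hm : IsPtn m)
    (hn : IsPtn n) (hsize : psize n = psize l + psize m)
    (nv : ℕ) (hlv : ∀ i, nv ≤ i → l i = 0) (hmv : ∀ i, nv ≤ i → m i = 0)
    (hnv : ∀ i, nv ≤ i → n i = 0) :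
    ∃ D : ℕ, ∀ d : ℕ, D ≤ d →
      gKron d (pad l d) (pad m d) (pad n d) = lrCoeff nv l m n := by
  obtain ⟨M, hM⟩ : ∃ M, M = l 0 + m 0 + n 0 + nv := ⟨_, rfl⟩
  have bl : ∀ i : Fin nv, l i + nv ≤ M := fun i => by have := hl 0 i (Nat.zero_le _); omega
  have bm : ∀ i : Fin nv, m i + nv ≤ M := fun i => by have := hm 0 i (Nat.zero_le _); omega
  have bn : ∀ i : Fin nv, n i + nv ≤ M := fun i => by have := hn 0 i (Nat.zero_le _); omega
  refine ⟨((nv * (nv * nv)) * M + 3 * ((nv * nv) * M) + 3 * (nv * M)) + psize n + nv + 1, fun d hd => ?_⟩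
  rw [ML.sum_chi l m n hlv hmv hnv d (by omega) (by omega) (by omega) (by omega),
    ML.sum_emb (M := M) l m n bl bm bn (by omega), ML.sum_abc l m n bl bm bn, ML.sum_QR,
    ML.lr_eq l m n bl bm]
  rw [← ML.psize_eq n hnv, ← ML.psize_eq l hlv, ← ML.psize_eq m hmv, hsize]
end
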